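/- arXiv:2203.00950 — 9 statements merged into one kernel-verified Lean document; each statement's English description precedes it below -/
import Mathlib

section
/- Let X be a metric space endowed with a dynamical system (flow) Π. Let (x_n) be a sequence of points of X and (T_n) a sequence of positive real numbers such that each x_n is a periodic point of period T_n (i.e. Π(x_n, T_n) = x_n), x_n → z in X, and T_n → 0⁺. Then z is an equilibrium point, i.e. Π(z, t) = z for all t ∈ ℝ. -/
/-- If a flow on a metric space has a sequence of periodic points
`x n` with positive periods `T n`, with `x n → z` and `T n → 0⁺`, then `z` is an
equilibrium point. -/
theorem periodic_points_limit_is_equilibrium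
    {X : Type*} [MetricSpace X] (φ : X → ℝ → X)
    (hcont : Continuous fun p : X × ℝ => φ p.1 p.2)
    (h0 : ∀ x : X, φ x 0 = x)
    (hadd : ∀ (x : X) (s t : ℝ), φ (φ x s) t = φ x (s + t))
    (x : ℕ → X) (T : ℕ → ℝ) (z : X)
    (hTpos : ∀ n, 0 < T n)
    (hper : ∀ n, φ (x n) (T n) = x n)
    (hx : Filter.Tendsto x Filter.atTop (nhds z))
    (hT0 : Filter.Tendsto T Filter.atTop (nhds 0)) :
    ∀ t : ℝ, φ z t = z := by
  intro t
  have hp : ∀ n, Function.Periodic (φ (x n)) (T n) := by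
    intro n s
    rw [add_comm, ← hadd, hper]
  have hk : ∀ n, φ (x n) (⌊t / T n⌋ * T n) = x n := by
    intro n
    rw [(hp n).int_mul_eq, h0]
  have hlim : Filter.Tendsto (fun n => (⌊t / T n⌋ : ℝ) * T n) Filter.atTop (nhds t) := by
    have hl : Filter.Tendsto (fun n => t - T n) Filter.atTop (nhds t) := by
      simpa using hT0.const_sub t
    refine tendsto_of_tendsto_of_tendsto_of_le_of_le hl tendsto_const_nhds ?_ ?_
    · intro n
      have h1 := Int.lt_floor_add_one (t / T n)
      rw [div_lt_iff₀ (hTpos n)] at h1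
      show t - T n ≤ (⌊t / T n⌋ : ℝ) * T n
      linarith
    · intro n
      exact (le_div_iff₀ (hTpos n)).1 (Int.floor_le (t / T n))
  have h2 := (hcont.tendsto (z, t)).comp (hx.prodMk_nhds hlim)
  have h3 : Filter.Tendsto x Filter.atTop (nhds (φ z t)) :=
    h2.congr hk
  exact tendsto_nhds_unique h3 hx
end

section
/- Let X be a metric space endowed with a dynamical system (flow) Π and let M ⊆ X be a nonempty compact positively invariant set. If M has the fixed point property, then M contains an equilibrium point, i.e. there exists z ∈ M with Π(z,t) = z for all t ∈ ℝ. -/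
/-- A nonempty compact positively invariant set with the fixed point
property, for a flow on a metric space, contains an equilibrium point. -/
theorem equilibrium_in_compact_invariant_FPP_set
    {X : Type*} [MetricSpace X] (φ : X → ℝ → X)
    (hcont : Continuous fun p : X × ℝ => φ p.1 p.2)
    (h0 : ∀ x : X, φ x 0 = x)
    (hadd : ∀ (x : X) (s t : ℝ), φ (φ x s) t = φ x (s + t))
    (M : Set X) (hne : M.Nonempty) (hcomp : IsCompact M)
    (hpos : ∀ x ∈ M, ∀ t : ℝ, 0 ≤ t → φ x t ∈ M)
    (hfpp : ∀ ψ : M → M, Continuous ψ → ∃ x : M, ψ x = x) :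
    ∃ z ∈ M, ∀ t : ℝ, φ z t = z := by
  have hc1 : ∀ t : ℝ, Continuous fun x => φ x t := fun t =>
    hcont.comp (continuous_id.prodMk continuous_const)
  have hc2 : ∀ x : X, Continuous fun t => φ x t := fun x =>
    hcont.comp (continuous_const.prodMk continuous_id)
  have hcl : ∀ n : ℕ, IsClosed {x | φ x ((1 / 2 : ℝ) ^ n) = x} := fun n =>
    isClosed_eq (hc1 _) continuous_id
  obtain ⟨z, hz⟩ := IsCompact.nonempty_iInter_of_sequence_nonempty_isCompact_isClosed
    (fun n : ℕ => M ∩ {x | φ x ((1 / 2 : ℝ) ^ n) = x})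
    (by
      rintro n x ⟨hxM, hx⟩
      refine ⟨hxM, ?_⟩
      simp only [Set.mem_setOf_eq] at hx ⊢
      have h2 : ((1 / 2 : ℝ) ^ n) = (1 / 2 : ℝ) ^ (n + 1) + (1 / 2 : ℝ) ^ (n + 1) := by
        rw [pow_succ]; ring
      rw [h2, ← hadd, hx, hx])
    (by
      intro n
      obtain ⟨x, hx⟩ := hfpp (fun x => ⟨φ x.1 ((1 / 2 : ℝ) ^ n), hpos x.1 x.2 _ (by positivity)⟩)
        (((hc1 _).comp continuous_subtype_val).subtype_mk _)
      exact ⟨x.1, x.2, congrArg Subtype.val hx⟩)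
    (hcomp.inter_right (hcl 0))
    (fun n => hcomp.isClosed.inter (hcl n))
  rw [Set.mem_iInter] at hz
  refine ⟨z, (hz 0).1, ?_⟩
  let S : AddSubgroup ℝ :=
    { carrier := {t | φ z t = z}
      zero_mem' := h0 z
      add_mem' := by
        intro a b ha hb
        simp only [Set.mem_setOf_eq] at *
        rw [← hadd, ha, hb]
      neg_mem' := by
        intro a ha
        simp only [Set.mem_setOf_eq] at *
        have h := hadd z a (-a)
        rw [ha, add_neg_cancel, h0] at h
        exact h }
  have hd : Dense (S : Set ℝ) := by
    apply AddSubgroup.dense_of_not_isolated_zero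
    intro ε hε
    obtain ⟨n, hn⟩ := exists_pow_lt_of_lt_one hε (by norm_num : (1 / 2 : ℝ) < 1)
    exact ⟨(1 / 2 : ℝ) ^ n, (hz n).2, by positivity, hn⟩
  have hS : IsClosed (S : Set ℝ) := isClosed_eq (hc2 z) continuous_const
  intro t
  have ht : t ∈ (S : Set ℝ) := by
    rw [← hS.closure_eq, hd.closure_eq]; trivial
  exact ht
end

section
/- Let C ⊂ ℝ^N be a nonempty, closed, bounded and convex set, and let f : ℝ^N → ℝ^N be continuous. Suppose that for every outer normal field ν : ∂C → S^{N−1} it holds that ⟨f(x), ν(x)⟩ ≤ 0 for all x ∈ ∂C. Then there exists z ∈ C with f(z) = 0. -/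
open scoped RealInnerProductSpace

lemma aux_proj {N : ℕ} (C : Set (EuclideanSpace ℝ (Fin N)))
    (hne : C.Nonempty) (hclosed : IsClosed C) (hconv : Convex ℝ C) :
    ∃ P : EuclideanSpace ℝ (Fin N) → EuclideanSpace ℝ (Fin N),
      (∀ x, P x ∈ C) ∧ (∀ x, ∀ u ∈ C, ⟪x - P x, u - P x⟫ ≤ 0) ∧ LipschitzWith 1 P ∧
      (∀ x ∈ C, P x = x) := by
  choose P hP hP' using exists_norm_eq_iInf_of_complete_convex hne hclosed.isComplete hconv
  have key : ∀ x, ∀ u ∈ C, ⟪x - P x, u - P x⟫ ≤ 0 := fun x =>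
    (norm_eq_iInf_iff_real_inner_le_zero hconv (hP x)).1 (hP' x)
  refine ⟨P, hP, key, ?_, ?_⟩
  · refine LipschitzWith.of_dist_le_mul fun x y => ?_
    rw [dist_eq_norm, dist_eq_norm, NNReal.coe_one, one_mul]
    have h1 := key x (P y) (hP y)
    have h2 := key y (P x) (hP x)
    have h3 : ‖P x - P y‖ ^ 2 ≤ ⟪x - y, P x - P y⟫ := by
      rw [← real_inner_self_eq_norm_sq]
      have : ⟪x - y, P x - P y⟫ = ⟪P x - P y, P x - P y⟫ - ⟪x - P x, P y - P x⟫
          - ⟪y - P y, P x - P y⟫ := by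
        simp only [inner_sub_left, inner_sub_right]; ring
      linarith
    have h4 := real_inner_le_norm (x - y) (P x - P y)
    by_contra! h
    nlinarith [norm_nonneg (x - y), norm_nonneg (P x - P y)]
  · intro x hx
    have := key x x hx
    rw [real_inner_self_eq_norm_sq] at this
    have : ‖x - P x‖ = 0 := by nlinarith [norm_nonneg (x - P x)]
    rw [norm_eq_zero, sub_eq_zero] at this
    exact this.symm

lemma aux_det {N : ℕ} (s : Finset ℝ) (hs : N < s.card)
    (A : EuclideanSpace ℝ (Fin N) →L[ℝ] EuclideanSpace ℝ (Fin N)) (t : ℝ) :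
    (1 + t • A).det = ∑ i ∈ s, (1 + i • A).det * (Lagrange.basis s id i).eval t := by
  classical
  let b := (EuclideanSpace.basisFun (Fin N) ℝ).toBasis
  let M := LinearMap.toMatrix b b (A : EuclideanSpace ℝ (Fin N) →ₗ[ℝ] EuclideanSpace ℝ (Fin N))
  let p : Polynomial ℝ := Matrix.det ((Polynomial.X : Polynomial ℝ) • M.map Polynomial.C
    + (1 : Matrix (Fin N) (Fin N) ℝ).map Polynomial.C)
  have hp : ∀ t : ℝ, p.eval t = (1 + t • A).det := by
    intro t
    rw [ContinuousLinearMap.det, ← LinearMap.det_toMatrix b, ← Polynomial.coe_evalRingHom,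
      RingHom.map_det]
    congr 1
    have : ((1 + t • A : EuclideanSpace ℝ (Fin N) →L[ℝ] EuclideanSpace ℝ (Fin N)) :
      EuclideanSpace ℝ (Fin N) →ₗ[ℝ] EuclideanSpace ℝ (Fin N)) = LinearMap.id + t • (A : EuclideanSpace ℝ (Fin N) →ₗ[ℝ] EuclideanSpace ℝ (Fin N)) := by
      ext; rfl
    rw [this, map_add (LinearMap.toMatrix b b), map_smul (LinearMap.toMatrix b b),
      LinearMap.toMatrix_id]
    ext i j
    by_cases hij : i = j
    · simp [M, hij]; ring
    · simp [M, hij]; exact mul_comm _ _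
  have hdeg : p.degree < s.card := by
    refine lt_of_le_of_lt Polynomial.degree_le_natDegree ?_
    have := Polynomial.natDegree_det_X_add_C_le M 1
    rw [Fintype.card_fin] at this
    exact_mod_cast lt_of_le_of_lt this hs
  have h := congrArg (Polynomial.eval t) (Lagrange.eq_interpolate (v := id) (Set.injOn_id _) hdeg)
  rw [hp] at h
  rw [h, Lagrange.interpolate_apply, Polynomial.eval_finsetSum]
  refine Finset.sum_congr rfl fun i _ => ?_
  simp [hp]

lemma aux_det_pos {N : ℕ} 
    (A : EuclideanSpace ℝ (Fin N) →L[ℝ] EuclideanSpace ℝ (Fin N)) (hA : ‖A‖ < 1) :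
    0 < (1 + A).det := by
  have hne : ∀ t ∈ Set.Icc (0:ℝ) 1, (1 + t • A).det ≠ 0 := by
    intro t ht h0
    have hu : IsUnit (1 + t • A) := by
      have : ‖-(t • A)‖ < 1 := by
        rw [norm_neg, norm_smul, Real.norm_of_nonneg ht.1]
        nlinarith [ht.1, ht.2, norm_nonneg A]
      simpa using isUnit_one_sub_of_norm_lt_one this
    have h2 : IsUnit (1 + t • A).det := by
      obtain ⟨u, hu⟩ := hu
      have h3 : (u : EuclideanSpace ℝ (Fin N) →L[ℝ] EuclideanSpace ℝ (Fin N)) * (↑u⁻¹) = 1 := u.mul_inv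
      have h4 := congrArg ContinuousLinearMap.det h3
      rw [hu] at h4
      have h5 : ((1 + t • A) * (↑u⁻¹)).det = (1 + t • A).det * (↑u⁻¹ : EuclideanSpace ℝ (Fin N) →L[ℝ] EuclideanSpace ℝ (Fin N)).det := by
        simp only [ContinuousLinearMap.det]
        rw [← LinearMap.det_comp]; rfl
      have h6 : (1 : EuclideanSpace ℝ (Fin N) →L[ℝ] EuclideanSpace ℝ (Fin N)).det = 1 := LinearMap.det_id
      rw [h5, h6] at h4
      exact IsUnit.of_mul_eq_one _ h4
    exact h2.ne_zero h0
  have hc : Continuous fun t : ℝ => (1 + t • A).det := by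
    have := ContinuousLinearMap.continuous_det (𝕜 := ℝ) (E := EuclideanSpace ℝ (Fin N))
    exact this.comp (by fun_prop)
  by_contra! hle
  have h0 : (1 + (0:ℝ) • A).det = 1 := by
    rw [zero_smul ℝ A, add_zero]; exact LinearMap.det_id
  have := intermediate_value_Icc' (zero_le_one (α := ℝ)) hc.continuousOn
  have hm : (0:ℝ) ∈ Set.Icc (1 + (1:ℝ) • A).det (1 + (0:ℝ) • A).det := by
    rw [h0, one_smul]; exact ⟨hle, zero_le_one⟩
  obtain ⟨t, ht, h⟩ := this hm
  exact hne t ht h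

open MeasureTheory in
lemma aux_no_retract {N : ℕ} (ρ : ℝ) (hρ : 0 < ρ)
    (r : EuclideanSpace ℝ (Fin N) → EuclideanSpace ℝ (Fin N)) (hr : ContDiff ℝ 1 r)
    (hn : ∀ x, ‖r x‖ = ρ) (hs : ∀ x, ‖x‖ = ρ → r x = x) : False := by
  set B : Set (EuclideanSpace ℝ (Fin N)) := Metric.ball 0 ρ
  let g : (EuclideanSpace ℝ (Fin N)) → (EuclideanSpace ℝ (Fin N)) := fun x => r x - x
  have hg : ContDiff ℝ 1 g := hr.sub contDiff_id
  obtain ⟨K, hK⟩ : ∃ K, LipschitzOnWith K g (Metric.closedBall 0 ρ) :=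
    hg.contDiffOn.exists_lipschitzOnWith one_ne_zero (convex_closedBall _ _)
      (isCompact_closedBall _ _)
  obtain ⟨P, hP, hPi, hPl, hPe⟩ := aux_proj (Metric.closedBall (0:(EuclideanSpace ℝ (Fin N))) ρ)
    ⟨0, by simp [hρ.le]⟩ Metric.isClosed_closedBall (convex_closedBall _ _)
  let G : (EuclideanSpace ℝ (Fin N)) → (EuclideanSpace ℝ (Fin N)) := fun x => g (P x)
  have hG : LipschitzWith K G := by
    have := hK.comp (hPl.lipschitzOnWith (s := Set.univ)) (fun x _ => hP x)
    rw [mul_one] at this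
    exact lipschitzOnWith_univ.1 this
  have hGin : ∀ x ∈ B, G x = g x := fun x hx => by
    simp only [G]; rw [hPe x (Metric.ball_subset_closedBall hx)]
  have hGout : ∀ x, x ∉ B → G x = 0 := by
    intro x hx
    have hx' : ρ ≤ ‖x‖ := by simpa [B] using hx
    have h1 : ‖P x‖ = ρ := by
      by_contra hne
      have hlt : ‖P x‖ < ρ := lt_of_le_of_ne (by simpa using hP x) hne
      -- P x interior, so x = P x
      have hxP : x - P x ≠ 0 := by
        intro h; rw [sub_eq_zero] at h; rw [← h] at hlt; linarith
      have hpos : 0 < ‖x - P x‖ := norm_pos_iff.2 hxP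
      let ε := (ρ - ‖P x‖) / ‖x - P x‖
      have hε : 0 < ε := div_pos (by linarith) hpos
      have := hPi x (P x + ε • (x - P x)) (by
        rw [mem_closedBall_zero_iff]
        refine (norm_add_le _ _).trans ?_
        rw [norm_smul, Real.norm_of_nonneg hε.le]
        simp only [ε]; rw [div_mul_cancel₀ _ hpos.ne']; linarith)
      rw [add_sub_cancel_left, inner_smul_right, real_inner_self_eq_norm_sq] at this
      have : 0 < ε * ‖x - P x‖ ^ 2 := by positivity
      linarith
    simp only [G, g]; rw [hs _ h1, sub_self]
  -- derivative of g
  have hg' : ∀ x, HasFDerivAt g (fderiv ℝ g x) x := fun x =>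
    (hg.differentiable one_ne_zero x).hasFDerivAt
  have hgc : Continuous (fderiv ℝ g) := hg.continuous_fderiv one_ne_zero
  have hgK : ∀ x ∈ B, ‖fderiv ℝ g x‖ ≤ K := fun x hx =>
    (hg' x).le_of_lipschitzOn (Filter.mem_of_superset (Metric.isOpen_ball.mem_nhds hx)
      Metric.ball_subset_closedBall) hK
  -- the small t identity
  have hsmall : ∀ t : ℝ, 0 < t → t * K < 1 → ∫ x in B, (1 + t • fderiv ℝ g x).det = volume.real B := by
    intro t ht htK
    let φ : (EuclideanSpace ℝ (Fin N)) → (EuclideanSpace ℝ (Fin N)) := fun x => x + t • G x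
    have happ : ApproximatesLinearOn φ ((ContinuousLinearEquiv.refl ℝ (EuclideanSpace ℝ (Fin N)) : (EuclideanSpace ℝ (Fin N)) ≃L[ℝ] (EuclideanSpace ℝ (Fin N))) : (EuclideanSpace ℝ (Fin N)) →L[ℝ] (EuclideanSpace ℝ (Fin N))) Set.univ (Real.toNNReal t * K) := by
      intro x _ y _
      have : φ x - φ y - (x - y) = t • (G x - G y) := by
        simp only [φ, smul_sub]; abel
      simp only [ContinuousLinearEquiv.coe_coe, ContinuousLinearEquiv.refl_apply, this]
      rw [norm_smul, Real.norm_of_nonneg ht.le]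
      have := hG.norm_sub_le x y
      rw [NNReal.coe_mul, Real.coe_toNNReal _ ht.le, mul_assoc]
      exact mul_le_mul_of_nonneg_left this ht.le
    have hcc : Subsingleton (EuclideanSpace ℝ (Fin N)) ∨ (Real.toNNReal t * K : NNReal) < ‖(((ContinuousLinearEquiv.refl ℝ (EuclideanSpace ℝ (Fin N))).symm : (EuclideanSpace ℝ (Fin N)) ≃L[ℝ] (EuclideanSpace ℝ (Fin N))) : (EuclideanSpace ℝ (Fin N)) →L[ℝ] (EuclideanSpace ℝ (Fin N)))‖₊⁻¹ := by
      rcases subsingleton_or_nontrivial (EuclideanSpace ℝ (Fin N)) with h | h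
      · exact Or.inl h
      · right
        have : ‖(((ContinuousLinearEquiv.refl ℝ (EuclideanSpace ℝ (Fin N))).symm : (EuclideanSpace ℝ (Fin N)) ≃L[ℝ] (EuclideanSpace ℝ (Fin N))) : (EuclideanSpace ℝ (Fin N)) →L[ℝ] (EuclideanSpace ℝ (Fin N)))‖₊ = 1 := by
          ext; exact ContinuousLinearMap.norm_id
        rw [this, inv_one]
        rw [← NNReal.coe_lt_coe, NNReal.coe_mul, Real.coe_toNNReal _ ht.le]
        exact htK
    have hinj : Function.Injective φ := Set.injOn_univ.1 (happ.injOn hcc)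
    have hsurj := happ.surjective hcc
    have hout : ∀ x, x ∉ B → φ x = x := fun x hx => by simp [φ, hGout x hx]
    have himg : φ '' B = B := by
      ext y
      constructor
      · rintro ⟨x, hx, rfl⟩
        by_contra hy
        have := hinj (hout _ hy)
        rw [this] at hy; exact hy hx
      · intro hy
        obtain ⟨x, rfl⟩ := hsurj y
        refine ⟨x, ?_, rfl⟩
        by_contra hx
        rw [hout x hx] at hy; exact hx hy
    have hder : ∀ x ∈ B, HasFDerivWithinAt φ (1 + t • fderiv ℝ g x) B x := by
      intro x hx
      have h1 : HasFDerivWithinAt (fun x => x + t • g x) (1 + t • fderiv ℝ g x) B x :=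
        ((hasFDerivAt_id x).add ((hg' x).const_smul t)).hasFDerivWithinAt
      exact h1.congr (fun y hy => by simp only [φ, hGin y hy]) (by simp only [φ, hGin x hx])
    have hcv := integral_image_eq_integral_abs_det_fderiv_smul volume
      (measurableSet_ball : MeasurableSet B) hder hinj.injOn (fun _ => (1:ℝ))
    rw [himg] at hcv
    simp only [integral_const, smul_eq_mul, mul_one, measureReal_restrict_apply_univ] at hcv
    rw [hcv]
    refine setIntegral_congr_fun measurableSet_ball fun x hx => ?_
    refine (abs_of_pos (aux_det_pos _ ?_)).symm
    rw [norm_smul, Real.norm_of_nonneg ht.le]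
    exact lt_of_le_of_lt (mul_le_mul_of_nonneg_left (hgK x hx) ht.le) htK
  -- nodes
  obtain ⟨s, hs1, hs2⟩ : ∃ s : Finset ℝ, (∀ t ∈ s, 0 < t ∧ t * K < 1) ∧ s.card = N + 1 := by
    have hinf : (Set.Ioo (0:ℝ) (1 / (K + 1))).Infinite := Set.Ioo_infinite (by positivity)
    obtain ⟨s, h1, h2⟩ := hinf.exists_subset_card_eq (N + 1)
    refine ⟨s, fun t ht => ?_, h2⟩
    have := h1 ht
    refine ⟨this.1, ?_⟩
    have h3 := this.2
    have hK0 : (0:ℝ) ≤ K := K.2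
    rw [lt_div_iff₀ (by positivity)] at h3
    nlinarith [this.1]
  have hdet : ∀ x, (1 + (1:ℝ) • fderiv ℝ g x).det = 0 := by
    intro x
    have hrd : HasFDerivAt r (1 + (1:ℝ) • fderiv ℝ g x) x := by
      have := (hasFDerivAt_id x).add (hg' x)
      rw [one_smul]
      have hrg : id + g = r := by ext1 y; simp [g]
      rw [hrg] at this
      exact this
    have hort : ∀ v, ⟪r x, (1 + (1:ℝ) • fderiv ℝ g x) v⟫ = 0 := by
      intro v
      have h1 := hrd.norm_sq
      have h2 : HasFDerivAt (fun y => ‖r y‖ ^ 2) (0 : (EuclideanSpace ℝ (Fin N)) →L[ℝ] ℝ) x := by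
        simp only [hn]; exact hasFDerivAt_const _ _
      have h3 := congrArg (fun L => L v) (h1.unique h2)
      simp at h3
      simp [inner_add_right]
      linarith
    by_contra h
    have hsurj : Function.Surjective (1 + (1:ℝ) • fderiv ℝ g x : (EuclideanSpace ℝ (Fin N)) →L[ℝ] (EuclideanSpace ℝ (Fin N))) := by
      exact (LinearMap.equivOfDetNeZero (𝕜 := ℝ) _ h).surjective
    obtain ⟨v, hv⟩ := hsurj (r x)
    have := hort v
    rw [hv, real_inner_self_eq_norm_sq, hn] at this
    nlinarith
  have hint : ∀ t : ℝ, IntegrableOn (fun x => (1 + t • fderiv ℝ g x).det) B := by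
    intro t
    have hc : Continuous (fun x => (1 + t • fderiv ℝ g x).det) :=
      (ContinuousLinearMap.continuous_det (𝕜 := ℝ) ).comp (by fun_prop)
    exact (hc.continuousOn.integrableOn_compact (isCompact_closedBall (0:(EuclideanSpace ℝ (Fin N))) ρ)).mono_set
      Metric.ball_subset_closedBall
  have h1 : ∫ x in B, (1 + (1:ℝ) • fderiv ℝ g x).det = 0 := by
    simp_rw [hdet]; simp
  have h2 : ∫ x in B, (1 + (1:ℝ) • fderiv ℝ g x).det = volume.real B := by
    simp_rw [aux_det s (by omega : N < s.card) _ 1]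
    rw [integral_finsetSum _ (fun i _ => (hint i).mul_const _)]
    simp_rw [integral_mul_const]
    rw [Finset.sum_congr rfl (fun i hi => by rw [hsmall i (hs1 i hi).1 (hs1 i hi).2]),
      ← Finset.mul_sum, ← Polynomial.eval_finsetSum, Lagrange.sum_basis (Set.injOn_id _)
        (Finset.card_pos.1 (by omega))]
    simp
  have h3 : 0 < volume.real B := by
    rw [measureReal_def]
    exact ENNReal.toReal_pos (Metric.measure_ball_pos volume _ hρ).ne' measure_ball_lt_top.ne
  linarith

lemma aux_vi {N : ℕ} (C : Set (EuclideanSpace ℝ (Fin N)))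
    (hne : C.Nonempty) (hclosed : IsClosed C)
    (hbdd : Bornology.IsBounded C) (hconv : Convex ℝ C)
    (f : EuclideanSpace ℝ (Fin N) → EuclideanSpace ℝ (Fin N))
    (hf : Continuous f) : ∃ z ∈ C, ∀ u ∈ C, ⟪f z, u - z⟫ ≤ 0 := by
  obtain ⟨P, hP, hPi, hPl, hPe⟩ := aux_proj C hne hclosed hconv
  let G : (EuclideanSpace ℝ (Fin N)) → (EuclideanSpace ℝ (Fin N)) := fun x => P (P x + f (P x))
  by_cases hfix : ∃ z, G z = z
  · obtain ⟨z, hz⟩ := hfix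
    have hzC : z ∈ C := hz ▸ hP _
    refine ⟨z, hzC, fun u hu => ?_⟩
    have := hPi (P z + f (P z)) u hu
    change ⟪P z + f (P z) - G z, u - G z⟫ ≤ 0 at this
    rw [hz, hPe z hzC, add_sub_cancel_left] at this
    exact this
  exfalso
  push Not at hfix
  have hcomp : IsCompact C := Metric.isCompact_of_isClosed_isBounded hclosed hbdd
  have hGu : UniformContinuous G := by
    refine hPl.uniformContinuous.comp (hPl.uniformContinuous.add ?_)
    have h1 := hcomp.uniformContinuousOn_of_continuous hf.continuousOn
    have := h1.comp (uniformContinuousOn_univ.2 hPl.uniformContinuous) (fun x _ => hP x)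
    exact uniformContinuousOn_univ.1 this
  obtain ⟨R, hR0, hR⟩ : ∃ R > 0, ∀ x ∈ C, ‖x‖ ≤ R := hbdd.exists_pos_norm_le
  obtain ⟨ε, hε, hεG⟩ : ∃ ε > 0, ∀ x ∈ Metric.closedBall (0:(EuclideanSpace ℝ (Fin N))) (R+1), ε ≤ ‖x - G x‖ := by
    obtain ⟨x, _, hx⟩ := (isCompact_closedBall (0:(EuclideanSpace ℝ (Fin N))) (R+1)).exists_isMinOn
      ⟨0, by simp; linarith⟩ (f := fun x => ‖x - G x‖)
      (continuous_id.sub hGu.continuous).norm.continuousOn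
    exact ⟨‖x - G x‖, norm_pos_iff.2 (sub_ne_zero.2 (hfix x).symm), fun y hy => hx hy⟩
  obtain ⟨p, hp, hpG⟩ := hGu.exists_contDiff_dist_le (lt_min hε one_pos)
  let χ : ContDiffBump (0:(EuclideanSpace ℝ (Fin N))) := ⟨R + 1, R + 2, by linarith, by linarith⟩
  let F : (EuclideanSpace ℝ (Fin N)) → (EuclideanSpace ℝ (Fin N)) := fun x => x - χ x • p x
  have hF : ContDiff ℝ 1 F :=
    contDiff_id.sub (χ.contDiff.smul (hp.of_le (by exact_mod_cast le_top)))
  have hF0 : ∀ x, F x ≠ 0 := by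
    intro x hx
    have hx' : x = χ x • p x := sub_eq_zero.1 hx
    have hpx : ‖p x‖ ≤ R + 1 := by
      have h1 := (hpG x).trans_le (min_le_right _ _)
      rw [dist_eq_norm] at h1
      have h2 := hR (G x) (hP _)
      have h3 := norm_le_norm_add_norm_sub' (p x) (G x)
      linarith
    have hxb : ‖x‖ ≤ R + 1 := by
      calc ‖x‖ = ‖χ x • p x‖ := by rw [← hx']
        _ = χ x * ‖p x‖ := by rw [norm_smul, Real.norm_of_nonneg χ.nonneg]
        _ ≤ 1 * ‖p x‖ := by gcongr; exact χ.le_one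
        _ ≤ R + 1 := by rw [one_mul]; exact hpx
    have hxm : x ∈ Metric.closedBall (0:(EuclideanSpace ℝ (Fin N))) (R+1) := by simpa using hxb
    have h1 : χ x = 1 := χ.one_of_mem_closedBall hxm
    rw [h1, one_smul] at hx'
    have h2 := (hpG x).trans_le (min_le_left _ _)
    rw [← hx', dist_eq_norm] at h2
    linarith [hεG x hxm]
  have hFo : ∀ x, ‖x‖ = R + 2 → F x = x := by
    intro x hx
    have : χ x = 0 := χ.zero_of_le_dist (by simp [χ, hx])
    simp [F, this]
  refine aux_no_retract (R + 2) (by linarith) (fun x => ((R + 2) / ‖F x‖) • F x) ?_ ?_ ?_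
  · exact (contDiff_const.div (hF.norm ℝ hF0) (fun x => norm_ne_zero_iff.2 (hF0 x))).smul hF
  · intro x
    have := norm_pos_iff.2 (hF0 x)
    rw [norm_smul, Real.norm_of_nonneg (by positivity), div_mul_cancel₀ _ this.ne']
  · intro x hx
    simp only [hFo x hx, hx]
    rw [div_self (by linarith), one_smul]

lemma aux_support {N : ℕ} (C : Set (EuclideanSpace ℝ (Fin N)))
    (hne : C.Nonempty) (hclosed : IsClosed C) (hconv : Convex ℝ C)
    (x : EuclideanSpace ℝ (Fin N)) (hx : x ∈ frontier C) :
    ∃ n : EuclideanSpace ℝ (Fin N), ‖n‖ = 1 ∧ ∀ u ∈ C, ⟪u - x, n⟫ ≤ 0 := by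
  obtain ⟨P, hP, hPi, hPl, hPe⟩ := aux_proj C hne hclosed hconv
  have hxC : x ∈ C := hclosed.frontier_subset hx
  have hx2 : x ∈ closure Cᶜ := frontier_subset_closure (by rwa [frontier_compl])
  obtain ⟨y, hy, hyx⟩ := mem_closure_iff_seq_limit.1 hx2
  have hpos : ∀ k, 0 < ‖y k - P (y k)‖ := fun k => norm_pos_iff.2 fun h => hy k (by
    rw [sub_eq_zero.1 h]; exact hP _)
  let n := fun k => (‖y k - P (y k)‖⁻¹) • (y k - P (y k))
  have hn : ∀ k, n k ∈ Metric.sphere (0 : EuclideanSpace ℝ (Fin N)) 1 := fun k => by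
    rw [mem_sphere_zero_iff_norm, norm_smul, norm_inv, norm_norm, inv_mul_cancel₀ (hpos k).ne']
  obtain ⟨m, hm, φ, hφ, hlim⟩ := (isCompact_sphere (0 : EuclideanSpace ℝ (Fin N)) 1).tendsto_subseq hn
  refine ⟨m, by simpa using hm, fun u hu => ?_⟩
  have hPy : Filter.Tendsto (fun k => P (y (φ k))) Filter.atTop (nhds x) := by
    have := (hPl.continuous.tendsto x).comp (hyx.comp hφ.tendsto_atTop)
    rwa [hPe x hxC] at this
  have ht : Filter.Tendsto (fun k => ⟪u - P (y (φ k)), n (φ k)⟫) Filter.atTop (nhds ⟪u - x, m⟫) :=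
    (tendsto_const_nhds.sub hPy).inner hlim
  refine le_of_tendsto' ht fun k => ?_
  have := hPi (y (φ k)) u hu
  rw [real_inner_comm] at this
  simp only [n]
  rw [inner_smul_right]
  exact mul_nonpos_of_nonneg_of_nonpos (by positivity) this

theorem zero_of_field_convex_all_outer_normal_fields
    {N : ℕ} (C : Set (EuclideanSpace ℝ (Fin N)))
    (hne : C.Nonempty) (hclosed : IsClosed C)
    (hbdd : Bornology.IsBounded C) (hconv : Convex ℝ C)
    (f : EuclideanSpace ℝ (Fin N) → EuclideanSpace ℝ (Fin N))
    (hf : Continuous f)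
    (hnormal : ∀ ν : EuclideanSpace ℝ (Fin N) → EuclideanSpace ℝ (Fin N),
      (∀ x ∈ frontier C, ‖ν x‖ = 1 ∧ ∀ u ∈ C, ⟪u - x, ν x⟫ ≤ 0) →
      ∀ x ∈ frontier C, ⟪f x, ν x⟫ ≤ 0) :
    ∃ z ∈ C, f z = 0 := by
  classical
  obtain ⟨z, hz, hvi⟩ := aux_vi C hne hclosed hbdd hconv f hf
  refine ⟨z, hz, ?_⟩
  by_contra hfz
  have hpos : 0 < ‖f z‖ := norm_pos_iff.2 hfz
  have hfr : z ∈ frontier C := by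
    refine ⟨subset_closure hz, fun hint => ?_⟩
    have hc : Filter.Tendsto (fun t : ℝ => z + t • f z) (nhdsWithin 0 (Set.Ioi 0)) (nhds z) := by
      have : Continuous (fun t : ℝ => z + t • f z) := by fun_prop
      have h := this.tendsto 0
      simp only [zero_smul, add_zero] at h
      exact h.mono_left nhdsWithin_le_nhds
    obtain ⟨t, ht, htp⟩ := ((hc.eventually (mem_interior_iff_mem_nhds.1 hint)).and
      self_mem_nhdsWithin).exists
    have h := hvi _ ht
    rw [add_sub_cancel_left, inner_smul_right, real_inner_self_eq_norm_sq] at h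
    have htp : 0 < t := htp
    have : 0 < t * ‖f z‖ ^ 2 := by positivity
    linarith
  choose! ν0 hν0 using aux_support C hne hclosed hconv
  have h := hnormal (Function.update ν0 z (‖f z‖⁻¹ • f z)) (by
    intro x hx
    by_cases hxz : x = z
    · subst hxz
      rw [Function.update_self]
      refine ⟨by rw [norm_smul, norm_inv, norm_norm, inv_mul_cancel₀ hpos.ne'], fun u hu => ?_⟩
      rw [inner_smul_right, real_inner_comm]
      exact mul_nonpos_of_nonneg_of_nonpos (by positivity) (hvi u hu)
    · rw [Function.update_of_ne hxz]
      exact hν0 x hx) z hfr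
  rw [Function.update_self, inner_smul_right, real_inner_self_eq_norm_sq] at h
  have : 0 < ‖f z‖⁻¹ * ‖f z‖ ^ 2 := by positivity
  linarith
end

section
/- Let C ⊂ ℝ^N be a nonempty, closed, bounded and convex set with nonempty interior, and let f : ℝ^N → ℝ^N be continuous. Suppose that there exists an outer normal field ν : ∂C → S^{N−1} such that ⟨f(x), ν(x)⟩ ≤ 0 for all x ∈ ∂C. Then C is weakly flow-invariant for the system ẏ = f(y): for each x₀ ∈ C there exist ε > 0 and a differentiable function y : [0, ε] → ℝ^N with y(0) = x₀, y'(t) = f(y(t)) for all t ∈ [0, ε], and y(t) ∈ C for all t ∈ [0, ε]. -/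
open Set Metric
open scoped RealInnerProductSpace

section helpers
variable {E : Type*} [NormedAddCommGroup E] [InnerProductSpace ℝ E]

lemma wfi_step (C : Set E) (hC : IsCompact C) (hconv : Convex ℝ C) (z : E) (r : ℝ) (hr : 0 < r)
    (hball : closedBall z r ⊆ C) (f ν : E → E) (hf : Continuous f)
    (hν : ∀ x ∈ frontier C, ‖ν x‖ = 1 ∧ ∀ u ∈ C, ⟪u - x, ν x⟫ ≤ 0)
    (hfν : ∀ x ∈ frontier C, ⟪f x, ν x⟫ ≤ 0) (η : ℝ) (hη : 0 < η) :
    ∃ h : ℝ, 0 < h ∧ h < η ∧ ∃ F : E → E, ∀ x ∈ C, x + h • F x ∈ C ∧ ‖F x - f x‖ ≤ η := by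
  obtain ⟨D0, hD0⟩ := hC.exists_bound_of_continuousOn (f := fun x => z - x) (by fun_prop)
  obtain ⟨D, hDpos, hD⟩ : ∃ D : ℝ, 0 < D ∧ ∀ x ∈ C, ‖z - x‖ ≤ D :=
    ⟨|D0| + 1, by positivity, fun x hx => (hD0 x hx).trans (by linarith [le_abs_self D0])⟩
  set δ := η / D with hδ
  have hδpos : 0 < δ := by positivity
  set g : E → E := fun x => f x + δ • (z - x) with hg
  have hgc : Continuous g := by fun_prop
  obtain ⟨K0, hK0⟩ := hC.exists_bound_of_continuousOn (f := g) hgc.continuousOn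
  obtain ⟨K, hKpos, hK⟩ : ∃ K : ℝ, 0 < K ∧ ∀ x ∈ C, ‖g x‖ ≤ K :=
    ⟨|K0| + 1, by positivity, fun x hx => (hK0 x hx).trans (by linarith [le_abs_self K0])⟩
  have huc := hC.uniformContinuousOn_of_continuous hgc.continuousOn
  obtain ⟨τ, hτ, hτ'⟩ := Metric.uniformContinuousOn_iff.1 huc (δ * r) (by positivity)
  set L := K * (D + K) / r + K with hL
  have hLpos : 0 < L := by positivity
  obtain ⟨h, hh, h1, h2, h3⟩ : ∃ h : ℝ, 0 < h ∧ h ≤ 1 ∧ h < η ∧ h * L < τ := by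
    refine ⟨min (min 1 (η / 2)) (τ / (2 * L)), by positivity, ?_, ?_, ?_⟩
    · exact (min_le_left _ _).trans (min_le_left _ _)
    · exact ((min_le_left _ _).trans (min_le_right _ _)).trans_lt (by linarith)
    · calc _ ≤ τ / (2 * L) * L := by gcongr; exact min_le_right _ _
        _ = τ / 2 := by field_simp
        _ < τ := by linarith
  refine ⟨h, hh, h2, g, fun x hx => ⟨?_, ?_⟩⟩
  swap
  · simp only [hg, add_sub_cancel_left, norm_smul, Real.norm_eq_abs, abs_of_pos hδpos]
    calc δ * ‖z - x‖ ≤ δ * D := by gcongr; exact hD x hx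
      _ = η := by rw [hδ]; field_simp
  by_contra hp
  set p := x + h • g x with hpdef
  set c := h * K / (r + h * K) with hc
  have hc0 : 0 ≤ c := by positivity
  have hc1 : c < 1 := by rw [hc, div_lt_one (by positivity)]; linarith
  have hq : (1 - c) • p + c • z ∈ C := by
    have hw : z + (r / K) • g x ∈ C := by
      apply hball
      simp only [mem_closedBall, dist_eq_norm, add_sub_cancel_left, norm_smul, Real.norm_eq_abs]
      rw [abs_of_pos (by positivity)]
      calc r / K * ‖g x‖ ≤ r / K * K := by gcongr; exact hK x hx
        _ = r := by field_simp
    have := hconv hx hw (sub_nonneg.2 hc1.le) hc0 (by ring)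
    convert this using 1
    have e : c * (r / K) = (1 - c) * h := by rw [hc]; field_simp; ring
    have e3 : c • (r / K) • g x = (1 - c) • h • g x := by rw [← mul_smul, ← mul_smul, e]
    rw [hpdef, smul_add (1 - c) x, smul_add c z, e3]; abel
  obtain ⟨b, hbs, hbf⟩ : ∃ b ∈ segment ℝ p ((1 - c) • p + c • z), b ∈ frontier C := by
    by_contra hcon
    push Not at hcon
    have hmem : ∀ b ∈ segment ℝ p ((1 - c) • p + c • z), b ∈ C → b ∈ interior C := by
      intro b hb hbC
      by_contra hbi
      exact hcon b hb ⟨subset_closure hbC, hbi⟩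
    obtain ⟨b, _, hb1, hb2⟩ :=
      (convex_segment (𝕜 := ℝ) p ((1 - c) • p + c • z)).isPreconnected (interior C) Cᶜ
      isOpen_interior hC.isClosed.isOpen_compl
      (fun b hb => (em (b ∈ C)).imp (hmem b hb) id)
      ⟨_, right_mem_segment ℝ _ _, hmem _ (right_mem_segment ℝ _ _) hq⟩
      ⟨p, left_mem_segment ℝ _ _, hp⟩
    exact hb2 (interior_subset hb1)
  obtain ⟨a, a', ha, ha', haa, hb⟩ := hbs
  set s := a' * c with hs
  have hs0 : 0 ≤ s := by positivity
  have hsc : s ≤ c := by rw [hs]; nlinarith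
  have hb' : b = (1 - s) • p + s • z := by
    rw [← hb, hs, show a = 1 - a' by linarith]; module
  have hbC : b ∈ C := hC.isClosed.frontier_subset hbf
  obtain ⟨n1, n2⟩ := hν b hbf
  have n3 := hfν b hbf
  have n4 : ⟪z - b, ν b⟫ ≤ - r := by
    have hz : z + r • ν b ∈ C := by
      apply hball
      simp [dist_eq_norm, norm_smul, n1, abs_of_pos hr]
    have := n2 _ hz
    rw [show z + r • ν b - b = (z - b) + r • ν b by abel, inner_add_left, real_inner_smul_left,
      real_inner_self_eq_norm_sq, n1] at this
    linarith
  have n5 : ⟪g b, ν b⟫ ≤ - (δ * r) := by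
    simp only [hg]
    rw [inner_add_left, real_inner_smul_left]
    nlinarith
  have n6 : 0 ≤ ⟪p - b, ν b⟫ := by
    have e : (1 - s) • (p - b) = (-s) • (z - b) := by rw [hb']; module
    have e2 := congrArg (fun v => ⟪v, ν b⟫) e
    simp only [real_inner_smul_left] at e2
    have : 0 ≤ (1 - s) * ⟪p - b, ν b⟫ := by rw [e2]; nlinarith
    exact nonneg_of_mul_nonneg_right this (by linarith)
  have hpx : ‖p - x‖ ≤ h * K := by
    rw [hpdef, add_sub_cancel_left, norm_smul, Real.norm_eq_abs, abs_of_pos hh]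
    gcongr; exact hK x hx
  have hd : dist x b < τ := by
    have hcle : c ≤ h * K / r := by
      rw [hc]; gcongr; nlinarith [mul_pos hh hKpos]
    have e1 : ‖b - p‖ ≤ h * K / r * (D + K) := by
      have : b - p = s • ((z - x) - (p - x)) := by rw [hb']; module
      rw [this, norm_smul, Real.norm_eq_abs, abs_of_nonneg hs0]
      gcongr
      · exact hsc.trans hcle
      · refine (norm_sub_le _ _).trans (add_le_add (hD x hx) (hpx.trans ?_))
        nlinarith
    rw [dist_comm, dist_eq_norm]
    calc ‖b - x‖ = ‖(b - p) + (p - x)‖ := by congr 1; abel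
      _ ≤ _ := norm_add_le _ _
      _ ≤ h * K / r * (D + K) + h * K := add_le_add e1 hpx
      _ = h * L := by rw [hL]; ring
      _ < τ := h3
  have n7 : ⟪g x - g b, ν b⟫ < δ * r := by
    have := hτ' x hx b hbC hd
    rw [dist_eq_norm] at this
    refine (real_inner_le_norm _ _).trans_lt ?_
    rwa [n1, mul_one]
  have n8 : ⟪p - b, ν b⟫ = ⟪x - b, ν b⟫ + h * (⟪g x - g b, ν b⟫ + ⟪g b, ν b⟫) := by
    rw [← inner_add_left, ← real_inner_smul_left, ← inner_add_left, hpdef]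
    congr 1; rw [sub_add_cancel]; abel
  have n9 := n2 x hx
  nlinarith

lemma wfi_approx (C : Set E) (f : E → E) (M : ℝ) (hM : ∀ x ∈ C, ‖f x‖ + 1 ≤ M)
    (x₀ : E) (hx₀ : x₀ ∈ C) (η h : ℝ) (hη1 : η ≤ 1) (hh : 0 < h) (hhη : h < η)
    (F : E → E) (hF : ∀ x ∈ C, x + h • F x ∈ C ∧ ‖F x - f x‖ ≤ η) :
    ∃ y : ℝ → E, y 0 = x₀ ∧ (∀ t, y t ∈ C) ∧ ∀ s t : ℝ, 0 ≤ s → s ≤ t →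
      ‖y t - y s‖ ≤ M * (t - s + η) ∧
      ∀ ρ ε : ℝ, 0 ≤ ε → (∀ z ∈ C, ∀ w ∈ C, ‖z - w‖ ≤ ρ → ‖f z - f w‖ ≤ ε) → M * (t - s + η) ≤ ρ →
        ‖y t - y s - (t - s) • f (y s)‖ ≤ (t - s + η) * (η + ε) + η * M := by
  set x : ℕ → E := fun k => (fun v => v + h • F v)^[k] x₀ with hx
  have hx0 : x 0 = x₀ := rfl
  have hxs : ∀ k, x (k+1) = x k + h • F (x k) := fun k => by
    simp only [hx, Function.iterate_succ_apply']
  have hxC : ∀ k, x k ∈ C := by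
    intro k
    induction k with
    | zero => exact hx₀
    | succ k ih => rw [hxs]; exact (hF _ ih).1
  have hMpos : 0 < M := by have := hM _ hx₀; have := norm_nonneg (f x₀); linarith
  have hFM : ∀ k, ‖F (x k)‖ ≤ M := fun k => by
    have h1 := (hF _ (hxC k)).2
    have h2 := hM _ (hxC k)
    have h3 := norm_add_le (F (x k) - f (x k)) (f (x k))
    rw [sub_add_cancel] at h3
    linarith
  have hlip : ∀ k m : ℕ, ‖x (k+m) - x k‖ ≤ M * (m * h) := by
    intro k m
    induction m with
    | zero => simp
    | succ m ih =>
      rw [← add_assoc, hxs]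
      calc _ = ‖(x (k+m) - x k) + h • F (x (k+m))‖ := by congr 1; abel
        _ ≤ _ := norm_add_le _ _
        _ ≤ M * (m * h) + h * M := by
          rw [norm_smul, Real.norm_eq_abs, abs_of_pos hh]
          gcongr
          exact hFM _
        _ = _ := by push_cast; ring
  refine ⟨fun t => x ⌊t / h⌋₊, by simp [hx0], fun t => hxC _, fun s t hs hst => ?_⟩
  obtain ⟨m, hm⟩ := Nat.exists_eq_add_of_le
    (Nat.floor_mono (div_le_div_of_nonneg_right hst hh.le) : ⌊s / h⌋₊ ≤ ⌊t / h⌋₊)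
  simp only [hm]
  set k := ⌊s / h⌋₊
  have a1 : (k : ℝ) * h ≤ s := by
    rw [← le_div_iff₀ hh]; exact Nat.floor_le (by positivity)
  have a2 : s < (k + 1) * h := by
    rw [← div_lt_iff₀ hh]; exact Nat.lt_floor_add_one _
  have a3 : ((k : ℝ) + m) * h ≤ t := by
    rw [← le_div_iff₀ hh]
    have := Nat.floor_le (show 0 ≤ t / h from div_nonneg (hs.trans hst) hh.le)
    rw [hm] at this; exact_mod_cast this
  have a4 : t < ((k : ℝ) + m + 1) * h := by
    rw [← div_lt_iff₀ hh]
    have := Nat.lt_floor_add_one (t / h)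
    rw [hm] at this; exact_mod_cast this
  have b1 : m * h ≤ t - s + η := by nlinarith
  have b2 : |m * h - (t - s)| ≤ η := by rw [abs_le]; constructor <;> nlinarith
  refine ⟨(hlip k m).trans (by gcongr), fun ρ ε hε huc hρ => ?_⟩
  have key : ∀ j : ℕ, j ≤ m → ‖x (k+j) - x k - (j * h) • f (x k)‖ ≤ (j * h) * (η + ε) := by
    intro j
    induction j with
    | zero => simp
    | succ j ih =>
      intro hj
      have hj' : j ≤ m := by omega
      have c1 : ‖f (x (k+j)) - f (x k)‖ ≤ ε := by
        refine huc _ (hxC _) _ (hxC _) ((hlip k j).trans (le_trans ?_ hρ))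
        refine mul_le_mul_of_nonneg_left (le_trans ?_ b1) hMpos.le
        gcongr
      have c2 := (hF _ (hxC (k+j))).2
      rw [← add_assoc, hxs]
      calc _ = ‖(x (k+j) - x k - (j * h) • f (x k)) +
              h • ((F (x (k+j)) - f (x (k+j))) + (f (x (k+j)) - f (x k)))‖ := by
            congr 1; push_cast; module
        _ ≤ _ := norm_add_le _ _
        _ ≤ (j * h) * (η + ε) + h * (η + ε) := by
          rw [norm_smul, Real.norm_eq_abs, abs_of_pos hh]
          gcongr
          · exact ih hj'
          · exact (norm_add_le _ _).trans (add_le_add c2 c1)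
        _ = _ := by push_cast; ring
  calc _ = ‖(x (k+m) - x k - (m * h) • f (x k)) + (m * h - (t - s)) • f (x k)‖ := by
        congr 1; module
    _ ≤ _ := norm_add_le _ _
    _ ≤ (m * h) * (η + ε) + η * M := by
      rw [norm_smul, Real.norm_eq_abs]
      gcongr
      · exact key m le_rfl
      · linarith
      · linarith [hM _ (hxC k)]
    _ ≤ _ := by
      have : 0 < η := hh.trans hhη
      gcongr

open Filter Topology in
lemma wfi_limit (C : Set E) (hC : IsCompact C) (f : E → E) (hf : Continuous f) (M : ℝ)
    (hMpos : 0 < M) (x₀ : E)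
    (H : ∀ η : ℝ, 0 < η → η ≤ 1 → ∃ y : ℝ → E, y 0 = x₀ ∧ (∀ t, y t ∈ C) ∧
      ∀ s t : ℝ, 0 ≤ s → s ≤ t →
      ‖y t - y s‖ ≤ M * (t - s + η) ∧
      ∀ ρ ε : ℝ, 0 ≤ ε → (∀ z ∈ C, ∀ w ∈ C, ‖z - w‖ ≤ ρ → ‖f z - f w‖ ≤ ε) → M * (t - s + η) ≤ ρ →
        ‖y t - y s - (t - s) • f (y s)‖ ≤ (t - s + η) * (η + ε) + η * M) :
    ∃ y : ℝ → E, y 0 = x₀ ∧ (∀ t, y t ∈ C) ∧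
      ∀ t, 0 ≤ t → HasDerivWithinAt y (f (y t)) (Ici 0) t := by
  let η : ℕ → ℝ := fun n => 1 / ((n : ℝ) + 1)
  have hη0 : ∀ n, 0 < η n := fun n => by positivity
  have hη1 : ∀ n, η n ≤ 1 := fun n => by
    simp only [η]; rw [div_le_one (by positivity)]; linarith [Nat.cast_nonneg (α := ℝ) n]
  choose Y hY0 hYC hY using fun n => H (η n) (hη0 n) (hη1 n)
  let U : Ultrafilter ℕ := hyperfilter ℕ
  have hηlim : Tendsto η U (𝓝 0) :=
    (tendsto_one_div_add_atTop_nhds_zero_nat (𝕜 := ℝ)).mono_left Nat.hyperfilter_le_atTop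
  have hlim : ∀ t, ∃ v ∈ C, Tendsto (fun n => Y n t) U (𝓝 v) := fun t => by
    have := hC.ultrafilter_le_nhds (U.map (fun n => Y n t)) (by
      rw [Ultrafilter.coe_map, le_principal_iff]
      exact Filter.mem_map.2 (Filter.univ_mem' fun n => hYC n t))
    exact this
  choose y hyC hy using hlim
  have hlip : ∀ s t, 0 ≤ s → s ≤ t → ‖y t - y s‖ ≤ M * (t - s) := fun s t hs hst => by
    have r : Tendsto (fun n => M * (t - s + η n)) U (𝓝 (M * (t - s + 0))) :=
      (hηlim.const_add _).const_mul _
    rw [add_zero] at r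
    exact le_of_tendsto_of_tendsto ((hy t).sub (hy s)).norm r
      (Eventually.of_forall fun n => (hY n s t hs hst).1)
  have hmain : ∀ ρ ε : ℝ, 0 ≤ ε → (∀ z ∈ C, ∀ w ∈ C, ‖z - w‖ ≤ ρ → ‖f z - f w‖ ≤ ε) →
      ∀ s t, 0 ≤ s → s ≤ t → M * (t - s) < ρ →
      ‖y t - y s - (t - s) • f (y s)‖ ≤ (t - s) * ε := by
    intro ρ ε hε huc s t hs hst hρ
    have r : Tendsto (fun n => M * (t - s + η n)) U (𝓝 (M * (t - s + 0))) :=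
      (hηlim.const_add _).const_mul _
    rw [add_zero] at r
    have r2 : Tendsto (fun n => (t - s + η n) * (η n + ε) + η n * M) U
        (𝓝 ((t - s + 0) * (0 + ε) + 0 * M)) :=
      ((hηlim.const_add _).mul (hηlim.add_const _)).add (hηlim.mul_const _)
    simp only [add_zero, zero_add, zero_mul] at r2
    refine le_of_tendsto_of_tendsto (((hy t).sub (hy s)).sub
      (((hf.tendsto _).comp (hy s)).const_smul (t - s))).norm r2 ?_
    filter_upwards [r.eventually_lt_const hρ] with n hn
    exact (hY n s t hs hst).2 ρ ε hε huc hn.le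
  refine ⟨y, ?_, hyC, fun t ht => ?_⟩
  · refine tendsto_nhds_unique (hy 0) ?_
    simp only [hY0]; exact tendsto_const_nhds
  rw [hasDerivWithinAt_iff_isLittleO, Asymptotics.isLittleO_iff]
  intro ε hε
  obtain ⟨τ, hτ, hτ'⟩ := Metric.uniformContinuousOn_iff.1
    (hC.uniformContinuousOn_of_continuous hf.continuousOn) (ε / 2) (by positivity)
  have huc : ∀ z ∈ C, ∀ w ∈ C, ‖z - w‖ ≤ τ / 2 → ‖f z - f w‖ ≤ ε / 2 := by
    intro z hz w hw hzw
    have := hτ' z hz w hw (by rw [dist_eq_norm]; linarith)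
    rw [dist_eq_norm] at this; exact this.le
  have hnb : ∀ᶠ s in 𝓝[Ici 0] t, |s - t| < τ / 2 / M := by
    apply nhdsWithin_le_nhds
    have := Metric.ball_mem_nhds t (show 0 < τ / 2 / M by positivity)
    filter_upwards [this] with s hs
    rwa [Metric.mem_ball, Real.dist_eq] at hs
  filter_upwards [hnb, self_mem_nhdsWithin] with s hs hs0
  rw [lt_div_iff₀ hMpos, mul_comm] at hs
  rw [Real.norm_eq_abs]
  rcases le_total t s with hts | hts
  · rw [abs_of_nonneg (sub_nonneg.2 hts)] at hs ⊢
    refine (hmain _ _ (by positivity) huc t s ht hts hs).trans ?_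
    nlinarith
  · rw [abs_of_nonpos (sub_nonpos.2 hts), neg_sub] at hs ⊢
    have h1 := hmain _ _ (by positivity) huc s t hs0 hts hs
    have h2 := huc _ (hyC s) _ (hyC t) (by
      rw [norm_sub_rev]; exact (hlip s t hs0 hts).trans hs.le)
    calc _ = ‖-((y t - y s - (t - s) • f (y s)) + (t - s) • (f (y s) - f (y t)))‖ := by
          congr 1; module
      _ ≤ (t - s) * (ε / 2) + (t - s) * (ε / 2) := by
        rw [norm_neg]
        refine (norm_add_le _ _).trans (add_le_add h1 ?_)
        rw [norm_smul, Real.norm_eq_abs, abs_of_nonneg (sub_nonneg.2 hts)]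
        exact mul_le_mul_of_nonneg_left h2 (sub_nonneg.2 hts)
      _ = _ := by ring

end helpers

/-- If `C ⊆ ℝ^N` is nonempty, closed, bounded, convex with nonempty
interior, `f` is continuous, and there exists an outer normal field `ν` with
`⟪f x, ν x⟫ ≤ 0` on `∂C`, then `C` is weakly flow-invariant for `ẏ = f(y)`. -/
theorem weak_flow_invariance_convex_some_outer_normal_field
    {N : ℕ} (C : Set (EuclideanSpace ℝ (Fin N)))
    (hne : C.Nonempty) (hclosed : IsClosed C)
    (hbdd : Bornology.IsBounded C) (hconv : Convex ℝ C)
    (hint : (interior C).Nonempty)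
    (f : EuclideanSpace ℝ (Fin N) → EuclideanSpace ℝ (Fin N))
    (hf : Continuous f)
    (hnormal : ∃ ν : EuclideanSpace ℝ (Fin N) → EuclideanSpace ℝ (Fin N),
      (∀ x ∈ frontier C, ‖ν x‖ = 1 ∧ ∀ u ∈ C, ⟪u - x, ν x⟫ ≤ 0) ∧
      ∀ x ∈ frontier C, ⟪f x, ν x⟫ ≤ 0) :
    ∀ x₀ ∈ C, ∃ ε > (0 : ℝ), ∃ y : ℝ → EuclideanSpace ℝ (Fin N),
      y 0 = x₀ ∧
      (∀ t ∈ Icc (0 : ℝ) ε, HasDerivWithinAt y (f (y t)) (Icc (0 : ℝ) ε) t) ∧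
      (∀ t ∈ Icc (0 : ℝ) ε, y t ∈ C) := by
  intro x₀ hx₀
  obtain ⟨ν, hν, hfν⟩ := hnormal
  have hC : IsCompact C := Metric.isCompact_of_isClosed_isBounded hclosed hbdd
  obtain ⟨z, hz⟩ := hint
  obtain ⟨r, hr, hball⟩ := Metric.nhds_basis_closedBall.mem_iff.1 (mem_interior_iff_mem_nhds.1 hz)
  obtain ⟨M0, hM0⟩ := hC.exists_bound_of_continuousOn hf.continuousOn
  have hM : ∀ x ∈ C, ‖f x‖ + 1 ≤ M0 + 1 := fun x hx => by linarith [hM0 x hx]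
  have hMpos : 0 < M0 + 1 := by linarith [hM _ hx₀, norm_nonneg (f x₀)]
  obtain ⟨y, hy0, hyC, hy⟩ := wfi_limit C hC f hf (M0 + 1) hMpos x₀ (fun η hη hη1 => by
    obtain ⟨h, hh, hhη, F, hF⟩ := wfi_step C hC hconv z r hr hball f ν hf hν hfν η hη
    exact wfi_approx C f (M0 + 1) hM x₀ hx₀ η h hη1 hh hhη F hF)
  exact ⟨1, one_pos, y, hy0, fun t ht => (hy t ht.1).mono Icc_subset_Ici_self, fun t _ => hyC t⟩
end

section
/- Let C ⊂ ℝ^N be a nonempty, closed, bounded and convex set with nonempty interior, and let f : ℝ^N → ℝ^N be continuous. Suppose that there exists an outer normal field ν : ∂C → S^{N−1} such that ⟨f(x), ν(x)⟩ ≤ 0 for all x ∈ ∂C. Then there exists z ∈ C with f(z) = 0. -/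
open scoped RealInnerProductSpace

abbrev EE (N : ℕ) := EuclideanSpace ℝ (Fin N)

theorem exists_proj {N : ℕ} (C : Set (EE N)) (hne : C.Nonempty) (hclosed : IsClosed C)
    (hconv : Convex ℝ C) : ∃ P : EE N → EE N, LipschitzWith 1 P ∧ (∀ x, P x ∈ C) ∧
      ∀ x, ∀ u ∈ C, ⟪x - P x, u - P x⟫ ≤ 0 := by
  choose P hP hP2 using exists_norm_eq_iInf_of_complete_convex hne hclosed.isComplete hconv
  have hv : ∀ x, ∀ u ∈ C, ⟪x - P x, u - P x⟫ ≤ 0 := fun x =>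
    (norm_eq_iInf_iff_real_inner_le_zero hconv (hP x)).1 (hP2 x)
  refine ⟨P, ?_, hP, hv⟩
  refine LipschitzWith.of_dist_le_mul fun x y => ?_
  have h1 := hv x _ (hP y)
  have h2 := hv y _ (hP x)
  have h3 : ⟪x - y, P x - P y⟫ ≥ ‖P x - P y‖ ^ 2 := by
    rw [← real_inner_self_eq_norm_sq]
    simp only [inner_sub_left, inner_sub_right] at *
    linarith
  have h4 := real_inner_le_norm (x - y) (P x - P y)
  rw [dist_eq_norm, dist_eq_norm]
  simp only [NNReal.coe_one, one_mul]
  by_contra hlt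
  push Not at hlt
  nlinarith [norm_nonneg (x - y), norm_nonneg (P x - P y)]

theorem det_lagrange {N : ℕ} (A : EE N →L[ℝ] EE N) (v : ℕ → ℝ) (hv : Function.Injective v) :
    (ContinuousLinearMap.id ℝ (EE N) + A).det = ∑ i ∈ Finset.range (N + 1),
      (Lagrange.basis (Finset.range (N + 1)) v i).eval 1 *
        (ContinuousLinearMap.id ℝ (EE N) + v i • A).det := by
  classical
  let b := (EuclideanSpace.basisFun (Fin N) ℝ).toBasis
  let M := LinearMap.toMatrix b b (A : EE N →ₗ[ℝ] EE N)
  let p : Polynomial ℝ := Matrix.det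
    ((Polynomial.X : Polynomial ℝ) • M.map Polynomial.C + (1 : Matrix (Fin N) (Fin N) ℝ).map Polynomial.C)
  have hp : ∀ t : ℝ, p.eval t = (ContinuousLinearMap.id ℝ (EE N) + t • A).det := by
    intro t
    have : (ContinuousLinearMap.id ℝ (EE N) + t • A).det = (t • M + 1).det := by
      rw [ContinuousLinearMap.det, ← LinearMap.det_toMatrix b]
      congr 1
      simp only [ContinuousLinearMap.toLinearMap_add, ContinuousLinearMap.toLinearMap_smul,
        ContinuousLinearMap.coe_id, map_add, map_smul, LinearMap.toMatrix_id, M]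
      rw [add_comm]
    rw [this]
    simp only [p]
    rw [← Polynomial.coe_evalRingHom, RingHom.map_det]
    congr 1
    ext i j
    simp [Matrix.one_apply]
    split_ifs <;> simp [mul_comm]
  have hdeg : p.degree < (Finset.range (N + 1)).card := by
    have := Polynomial.natDegree_det_X_add_C_le M 1
    simp only [Fintype.card_fin] at this
    refine lt_of_le_of_lt Polynomial.degree_le_natDegree ?_
    rw [Finset.card_range]
    exact_mod_cast Nat.lt_succ_of_le this
  have h1 := hp 1
  rw [one_smul] at h1
  rw [← h1, Lagrange.eq_interpolate (hv.injOn) hdeg, Lagrange.interpolate_apply,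
    Polynomial.eval_finsetSum]
  refine Finset.sum_congr rfl fun i _ => ?_
  rw [Polynomial.eval_mul, Polynomial.eval_C, hp, mul_comm]

theorem det_pos {N : ℕ} (A : EE N →L[ℝ] EE N) (h : ‖A‖ < 1) :
    0 < (ContinuousLinearMap.id ℝ (EE N) + A).det := by
  have hne : ∀ s ∈ Set.Icc (0:ℝ) 1, (ContinuousLinearMap.id ℝ (EE N) + s • A).det ≠ 0 := by
    intro s hs h0
    obtain ⟨x, hx, hx0⟩ := (Submodule.ne_bot_iff _).1
      (LinearMap.bot_lt_ker_of_det_eq_zero (f := ((ContinuousLinearMap.id ℝ (EE N) + s • A : EE N →L[ℝ] EE N) : EE N →ₗ[ℝ] EE N)) h0).ne'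
    have hx' : x + s • A x = 0 := by simpa using hx
    have h1 : ‖x‖ = s * ‖A x‖ := by
      have := congrArg norm (eq_neg_of_add_eq_zero_left hx')
      rwa [norm_neg, norm_smul, Real.norm_of_nonneg hs.1] at this
    have h2 := A.le_opNorm x
    have h3 : 0 < ‖x‖ := norm_pos_iff.2 hx0
    nlinarith [hs.1, hs.2, norm_nonneg (A x)]
  have hc : ContinuousOn (fun s : ℝ => (ContinuousLinearMap.id ℝ (EE N) + s • A).det) (Set.Icc 0 1) := by
    apply Continuous.continuousOn
    exact ContinuousLinearMap.continuous_det.comp (by fun_prop)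
  by_contra hcon
  push Not at hcon
  have := intermediate_value_Icc' (zero_le_one) hc
  obtain ⟨s, hs, hs0⟩ := this ⟨by simpa using hcon, by simp [ContinuousLinearMap.det]⟩
  exact hne s hs hs0

theorem ball_bij {N : ℕ} (h : EE N → EE N) (L : NNReal)
    (hL : LipschitzOnWith L h (Metric.closedBall 0 1)) (h0 : ∀ x, ‖x‖ = 1 → h x = 0)
    (t : NNReal) (ht : t * L < 1) :
    Set.InjOn (fun x => x + (t : ℝ) • h x) (Metric.ball 0 1) ∧
      (fun x => x + (t : ℝ) • h x) '' (Metric.ball 0 1) = Metric.ball 0 1 := by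
  obtain ⟨P, hP1, hP2, hP3⟩ := exists_proj (Metric.closedBall (0 : EE N) 1)
    ⟨0, by simp⟩ Metric.isClosed_closedBall (convex_closedBall 0 1)
  have hPid : ∀ x ∈ Metric.closedBall (0 : EE N) 1, P x = x := by
    intro x hx
    have := hP3 x x hx
    rw [real_inner_self_nonpos] at this
    exact (sub_eq_zero.1 this).symm
  have hPs : ∀ x, 1 ≤ ‖x‖ → ‖P x‖ = 1 := by
    intro x hx
    have h1 : ‖P x‖ ≤ 1 := by simpa using hP2 x
    by_contra hne
    have h2 : ‖P x‖ < 1 := lt_of_le_of_ne h1 hne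
    have h3 := hP3 x (‖x‖⁻¹ • x) (by
      simp only [mem_closedBall_zero_iff, norm_smul, norm_inv, norm_norm]
      rw [inv_mul_cancel₀ (by positivity)])
    have h4 := real_inner_le_norm x (P x)
    simp only [inner_sub_left, inner_sub_right, real_inner_smul_right,
      real_inner_self_eq_norm_sq] at h3
    have h5 : ‖x‖⁻¹ * ‖x‖ ^ 2 = ‖x‖ := by field_simp
    have h6 : ⟪x, P x⟫ < ‖x‖ := lt_of_le_of_lt h4 (by nlinarith)
    rw [h5, real_inner_comm x (P x)] at h3
    have h7 : ‖x‖⁻¹ ≤ 1 := inv_le_one_of_one_le₀ hx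
    have h8 : 0 < ‖x‖⁻¹ := by positivity
    have h9 : ‖x‖⁻¹ * ⟪x, P x⟫ ≤ ‖P x‖ := by
      calc _ ≤ ‖x‖⁻¹ * (‖x‖ * ‖P x‖) := by gcongr
        _ = _ := by rw [← mul_assoc, inv_mul_cancel₀ (by positivity), one_mul]
    nlinarith
  have hH : LipschitzWith L (fun x => h (P x)) := by
    have := hL.comp (hP1.lipschitzOnWith (s := Set.univ)) (fun x _ => hP2 x)
    simpa [lipschitzOnWith_univ, Function.comp_def] using this
  have hH0 : ∀ x, 1 ≤ ‖x‖ → h (P x) = 0 := fun x hx => h0 _ (hPs x hx)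
  have hcon : ∀ y : EE N, ContractingWith (t * L) (fun x => y - (t : ℝ) • h (P x)) := by
    intro y
    refine ⟨ht, LipschitzWith.of_dist_le_mul fun a b => ?_⟩
    rw [dist_eq_norm, sub_sub_sub_cancel_left, ← smul_sub, norm_smul, ← dist_eq_norm, dist_comm]
    have := hH.dist_le_mul a b
    simp only [NNReal.coe_mul, Real.norm_of_nonneg t.coe_nonneg]
    nlinarith [t.coe_nonneg, mul_le_mul_of_nonneg_left (hH.dist_le_mul b a) t.coe_nonneg,
      dist_comm a b, dist_comm (h (P a)) (h (P b)), mul_le_mul_of_nonneg_left this t.coe_nonneg]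
  have huniq : ∀ a b : EE N, a + (t : ℝ) • h (P a) = b + (t : ℝ) • h (P b) → a = b := by
    intro a b hab
    refine (hcon (a + (t : ℝ) • h (P a))).fixedPoint_unique' ?_ ?_
    · simp [Function.IsFixedPt]
    · rw [hab]; simp [Function.IsFixedPt]
  have hb : ∀ x ∈ Metric.ball (0 : EE N) 1, P x = x :=
    fun x hx => hPid x (Metric.ball_subset_closedBall hx)
  refine ⟨?_, ?_⟩
  · intro a ha b hb' hab
    apply huniq
    rw [hb a ha, hb b hb']
    exact hab
  · ext y
    constructor
    · rintro ⟨x, hx, rfl⟩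
      by_contra hy
      simp only [mem_ball_zero_iff, not_lt] at hy
      have := huniq (x + (t : ℝ) • h x) x (by rw [hH0 _ hy, hb x hx]; simp)
      rw [this] at hy
      simp only [mem_ball_zero_iff] at hx
      linarith
    · intro hy
      have hfix := (hcon y).fixedPoint_isFixedPt
      set x := ContractingWith.fixedPoint _ (hcon y)
      have hx : x + (t : ℝ) • h (P x) = y := by
        have h2 : y - (t : ℝ) • h (P x) = x := hfix
        exact (sub_eq_iff_eq_add.1 h2).symm
      simp only [mem_ball_zero_iff] at hy
      have hx1 : x ∈ Metric.ball (0 : EE N) 1 := by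
        by_contra hcc
        simp only [mem_ball_zero_iff, not_lt] at hcc
        rw [hH0 x hcc, smul_zero, add_zero] at hx
        rw [hx] at hcc
        linarith
      exact ⟨x, hx1, by rw [hb x hx1] at hx; exact hx⟩

theorem no_retraction {N : ℕ} (r : EE N → EE N)
    (hr : ∀ x ∈ Metric.closedBall (0 : EE N) 1, ContDiffAt ℝ 1 r x)
    (h1 : ∀ x ∈ Metric.closedBall (0 : EE N) 1, ‖r x‖ = 1)
    (h2 : ∀ x, ‖x‖ = 1 → r x = x) : False := by
  set h : EE N → EE N := fun x => r x - x with hh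
  have hd : ∀ x ∈ Metric.closedBall (0 : EE N) 1, ContDiffAt ℝ 1 h x :=
    fun x hx => (hr x hx).sub contDiffAt_id
  have hdiff : ∀ x ∈ Metric.closedBall (0 : EE N) 1, DifferentiableAt ℝ h x :=
    fun x hx => (hd x hx).differentiableAt (by simp)
  have hc : ContinuousOn (fderiv ℝ h) (Metric.closedBall 0 1) := fun x hx =>
    ((hd x hx).fderiv_right (m := 0) (by simp)).continuousAt.continuousWithinAt
  obtain ⟨K, hK⟩ := (isCompact_closedBall (0 : EE N) 1).exists_bound_of_continuousOn hc
  set L : NNReal := K.toNNReal with hLdef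
  have hK' : ∀ x ∈ Metric.closedBall (0 : EE N) 1, ‖fderiv ℝ h x‖ ≤ L := fun x hx =>
    (hK x hx).trans (Real.le_coe_toNNReal K)
  have hL : LipschitzOnWith L h (Metric.closedBall 0 1) :=
    Convex.lipschitzOnWith_of_nnnorm_fderiv_le hdiff (fun x hx => hK' x hx)
      (convex_closedBall 0 1)
  have h0 : ∀ x, ‖x‖ = 1 → h x = 0 := fun x hx => by simp [hh, h2 x hx]
  let v : ℕ → NNReal := fun i => (((i : NNReal) + 1) * (L + 1))⁻¹
  have hvinj : Function.Injective (fun i => (v i : ℝ)) := by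
    intro i j hij
    have hij' : v i = v j := NNReal.coe_injective hij
    have h3 := inv_injective hij'
    have h4 := mul_right_cancel₀ (by positivity : (L + 1) ≠ 0) h3
    exact_mod_cast add_right_cancel h4
  have hvL : ∀ i, v i * L < 1 := by
    intro i
    have : v i * (L + 1) ≤ 1 := by
      have e : v i * (L + 1) = ((i : NNReal) + 1)⁻¹ := by
        simp only [v]; field_simp
      rw [e]
      exact inv_le_one_of_one_le₀ (by simp)
    refine lt_of_lt_of_le ?_ this
    have : 0 < v i := by simp only [v]; positivity
    gcongr
    simp
  have hint : ∀ t : ℝ, MeasureTheory.IntegrableOn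
      (fun x => (ContinuousLinearMap.id ℝ (EE N) + t • fderiv ℝ h x).det)
      (Metric.ball 0 1) MeasureTheory.volume := by
    intro t
    refine MeasureTheory.IntegrableOn.mono_set ?_ Metric.ball_subset_closedBall
    refine ContinuousOn.integrableOn_compact (isCompact_closedBall _ _) ?_
    exact ContinuousLinearMap.continuous_det.comp_continuousOn
      (continuousOn_const.add (hc.const_smul t))
  have hval : ∀ i, ∫ x in Metric.ball (0 : EE N) 1,
      (ContinuousLinearMap.id ℝ (EE N) + (v i : ℝ) • fderiv ℝ h x).det
      = MeasureTheory.volume.real (Metric.ball (0 : EE N) 1) := by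
    intro i
    obtain ⟨hinj, himg⟩ := ball_bij h L hL h0 (v i) (hvL i)
    have := MeasureTheory.integral_image_eq_integral_abs_det_fderiv_smul MeasureTheory.volume
      (s := Metric.ball (0 : EE N) 1)
      (f := fun x => x + (v i : ℝ) • h x)
      (f' := fun x => ContinuousLinearMap.id ℝ (EE N) + (v i : ℝ) • fderiv ℝ h x)
      Metric.isOpen_ball.measurableSet
      (fun x hx => ((hasFDerivAt_id x).add
        ((hdiff x (Metric.ball_subset_closedBall hx)).hasFDerivAt.const_smul
          (v i : ℝ))).hasFDerivWithinAt) hinj (fun _ => (1 : ℝ))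
    rw [himg] at this
    rw [MeasureTheory.setIntegral_const, smul_eq_mul, mul_one] at this
    rw [this]
    refine MeasureTheory.setIntegral_congr_fun Metric.isOpen_ball.measurableSet fun x hx => ?_
    have hpos := det_pos ((v i : ℝ) • fderiv ℝ h x) (by
      rw [norm_smul, Real.norm_of_nonneg (v i).coe_nonneg]
      refine lt_of_le_of_lt (mul_le_mul_of_nonneg_left
        (hK' x (Metric.ball_subset_closedBall hx)) (v i).coe_nonneg) ?_
      exact_mod_cast hvL i)
    simp only [smul_eq_mul, mul_one]
    rw [abs_of_pos hpos]
  have hzero : ∀ x ∈ Metric.ball (0 : EE N) 1,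
      (ContinuousLinearMap.id ℝ (EE N) + fderiv ℝ h x).det = 0 := by
    intro x hx
    have hxc := Metric.ball_subset_closedBall hx
    have hrd : HasFDerivAt r (ContinuousLinearMap.id ℝ (EE N) + fderiv ℝ h x) x := by
      have := (hasFDerivAt_id x).add (hdiff x hxc).hasFDerivAt
      refine this.congr_of_eventuallyEq (Filter.Eventually.of_forall fun y => ?_)
      simp [hh]
    set D := ContinuousLinearMap.id ℝ (EE N) + fderiv ℝ h x
    have hin : ∀ w, ⟪r x, D w⟫ = 0 := by
      have e1 := hrd.norm_sq
      have e2 : HasFDerivAt (fun y => ‖r y‖ ^ 2) (0 : EE N →L[ℝ] ℝ) x := by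
        refine (hasFDerivAt_const (1 : ℝ) x).congr_of_eventuallyEq ?_
        filter_upwards [Metric.isOpen_ball.mem_nhds hx] with y hy
        rw [h1 y (Metric.ball_subset_closedBall hy)]; norm_num
      have e3 := e1.unique e2
      intro w
      have := DFunLike.congr_fun e3 w
      simpa using this
    by_contra hne
    have hsurj : Function.Surjective D := by
      have hu : IsUnit (LinearMap.det (D : EE N →ₗ[ℝ] EE N)) := isUnit_iff_ne_zero.2 hne
      exact ((LinearMap.equivOfDetNeZero (D : EE N →ₗ[ℝ] EE N) hne)).surjective
    obtain ⟨w, hw⟩ := hsurj (r x)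
    have := hin w
    rw [hw, real_inner_self_eq_norm_sq, h1 x hxc] at this
    norm_num at this
  have hfin : ∫ x in Metric.ball (0 : EE N) 1,
      (ContinuousLinearMap.id ℝ (EE N) + fderiv ℝ h x).det
      = MeasureTheory.volume.real (Metric.ball (0 : EE N) 1) := by
    have hfun : (fun x => (ContinuousLinearMap.id ℝ (EE N) + fderiv ℝ h x).det) = _ :=
      funext fun x => det_lagrange (fderiv ℝ h x) _ hvinj
    rw [hfun]
    rw [MeasureTheory.integral_finsetSum _ (fun i _ => (hint (v i)).const_mul _)]
    simp_rw [MeasureTheory.integral_const_mul, hval]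
    rw [← Finset.sum_mul, ← Polynomial.eval_finsetSum,
      Lagrange.sum_basis hvinj.injOn (by simp), Polynomial.eval_one, one_mul]
  rw [MeasureTheory.setIntegral_congr_fun Metric.isOpen_ball.measurableSet hzero] at hfin
  simp only [MeasureTheory.integral_zero] at hfin
  have : 0 < MeasureTheory.volume.real (Metric.ball (0 : EE N) 1) :=
    ENNReal.toReal_pos (Metric.measure_ball_pos _ _ one_pos).ne' MeasureTheory.measure_ball_lt_top.ne
  linarith

theorem brouwer_ball {N : ℕ} (G : EE N → EE N) (hG : Continuous G) (hb : ∀ x, ‖G x‖ ≤ 1) :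
    ∃ x, G x = x := by
  by_contra hcon
  push Not at hcon
  obtain ⟨x₀, -, hx₀⟩ := (isCompact_closedBall (0 : EE N) 1).exists_isMinOn ⟨0, by simp⟩
    (f := fun x => ‖G x - x‖) (by fun_prop)
  set δ := ‖G x₀ - x₀‖ with hδ
  have hδ0 : 0 < δ := norm_pos_iff.2 (sub_ne_zero.2 (hcon x₀))
  have hmin : ∀ x, ‖x‖ ≤ 1 → δ ≤ ‖G x - x‖ := fun x hx => hx₀ (by simpa using hx)
  obtain ⟨q, hq, hqG, -⟩ := hG.exists_contDiff_approx (1 : ℕ∞) (ε := fun _ => δ / 2)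
    continuous_const (fun _ => by positivity)
  set c : ℝ := (1 + δ / 2)⁻¹ with hc
  have hc0 : 0 < c := by positivity
  have hcc : c * (1 + δ / 2) = 1 := inv_mul_cancel₀ (by positivity)
  set p : EE N → EE N := fun x => c • q x with hp
  have hpd : ContDiff ℝ 1 p := by
    have hq' : ContDiff ℝ 1 q := by exact_mod_cast hq
    exact hq'.const_smul c
  have hqn : ∀ x, ‖q x‖ < 1 + δ / 2 := by
    intro x
    have h1 := hqG x
    rw [dist_eq_norm] at h1
    have h2 : ‖q x‖ ≤ ‖q x - G x‖ + ‖G x‖ := by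
      simpa using norm_add_le (q x - G x) (G x)
    linarith [hb x]
  have hp1 : ∀ x, ‖p x‖ < 1 := by
    intro x
    simp only [hp, norm_smul, Real.norm_of_nonneg hc0.le]
    rw [← hcc]
    exact mul_lt_mul_of_pos_left (hqn x) hc0
  have hpne : ∀ x, x - p x ≠ 0 := by
    intro x hx
    have hx1 : p x = x := (sub_eq_zero.1 hx).symm
    have hxn : ‖x‖ < 1 := by rw [← hx1]; exact hp1 x
    have hqx : q x = x + (δ / 2) • x := by
      have : (1 + δ / 2) • p x = q x := by
        simp only [hp, smul_smul]
        rw [mul_comm, hcc, one_smul]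
      rw [← this, hx1, add_smul, one_smul]
    have h1 := hqG x
    rw [dist_eq_norm] at h1
    have h2 := hmin x hxn.le
    have h3 : G x - x = -(q x - G x) + (δ / 2) • x := by rw [hqx]; abel
    have h4 : ‖G x - x‖ ≤ ‖q x - G x‖ + δ / 2 * ‖x‖ := by
      rw [h3]
      refine (norm_add_le _ _).trans ?_
      rw [norm_neg, norm_smul, Real.norm_of_nonneg (by positivity)]
    nlinarith
  set a : EE N → ℝ := fun x => ‖x - p x‖ ^ 2 with ha
  set b : EE N → ℝ := fun x => ⟪x, x - p x⟫ with hbdef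
  set d : EE N → ℝ := fun x => b x ^ 2 + a x * (1 - ‖x‖ ^ 2) with hd
  have ha0 : ∀ x, 0 < a x := fun x => by
    have := norm_pos_iff.2 (hpne x)
    simp only [ha]; positivity
  have hb0 : ∀ x, ‖x‖ = 1 → 0 < b x := by
    intro x hx
    simp only [hbdef, inner_sub_right, real_inner_self_eq_norm_sq, hx]
    have := real_inner_le_norm x (p x)
    rw [hx] at this
    linarith [hp1 x]
  have hd0 : ∀ x, ‖x‖ ≤ 1 → 0 < d x := by
    intro x hx
    rcases hx.lt_or_eq with hlt | heq
    · have h1 : 0 < 1 - ‖x‖ ^ 2 := by nlinarith [norm_nonneg x]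
      have := mul_pos (ha0 x) h1
      simp only [hd]; positivity
    · have := hb0 x heq
      simp only [hd, heq]
      simp
      positivity
  have had : ContDiff ℝ 1 a := (contDiff_id.sub hpd).norm_sq ℝ
  have hbd : ContDiff ℝ 1 b := contDiff_id.inner ℝ (contDiff_id.sub hpd)
  have hdd : ContDiff ℝ 1 d :=
    (hbd.pow 2).add (had.mul (contDiff_const.sub (contDiff_id.norm_sq ℝ)))
  refine no_retraction (fun x => x + ((-b x + √(d x)) / a x) • (x - p x)) ?_ ?_ ?_
  · intro x hx
    have hx' : ‖x‖ ≤ 1 := by simpa using hx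
    refine contDiffAt_id.add (ContDiffAt.smul (ContDiffAt.div (hbd.contDiffAt.neg.add
      (hdd.contDiffAt.sqrt (hd0 x hx').ne')) had.contDiffAt (ha0 x).ne')
      (contDiff_id.sub hpd).contDiffAt)
  · intro x hx
    have hx' : ‖x‖ ≤ 1 := by simpa using hx
    have hs := Real.sq_sqrt (hd0 x hx').le
    have : ‖x + ((-b x + √(d x)) / a x) • (x - p x)‖ ^ 2 = 1 := by
      rw [norm_add_sq_real, real_inner_smul_right, norm_smul, mul_pow, Real.norm_eq_abs, sq_abs]
      change ‖x‖ ^ 2 + 2 * ((-b x + √(d x)) / a x * b x) + ((-b x + √(d x)) / a x) ^ 2 * a x = 1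
      have := (ha0 x).ne'
      have e : d x = b x ^ 2 + a x * (1 - ‖x‖ ^ 2) := rfl
      rw [e] at hs ⊢
      field_simp
      ring_nf at hs ⊢
      linarith
    exact (pow_eq_one_iff_of_nonneg (norm_nonneg _) two_ne_zero).1 this
  · intro x hx
    have : d x = b x ^ 2 := by simp [hd, hx]
    simp [this, Real.sqrt_sq (hb0 x hx).le]

/-- If `C ⊆ ℝ^N` is nonempty, closed, bounded, convex with nonempty
interior, `f` is continuous, and there exists an outer normal field `ν` with
`⟪f x, ν x⟫ ≤ 0` on `∂C`, then `f` has a zero in `C`. -/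
theorem zero_of_field_convex_some_outer_normal_field
    {N : ℕ} (C : Set (EuclideanSpace ℝ (Fin N)))
    (hne : C.Nonempty) (hclosed : IsClosed C)
    (hbdd : Bornology.IsBounded C) (hconv : Convex ℝ C)
    (hint : (interior C).Nonempty)
    (f : EuclideanSpace ℝ (Fin N) → EuclideanSpace ℝ (Fin N))
    (hf : Continuous f)
    (hnormal : ∃ ν : EuclideanSpace ℝ (Fin N) → EuclideanSpace ℝ (Fin N),
      (∀ x ∈ frontier C, ‖ν x‖ = 1 ∧ ∀ u ∈ C, ⟪u - x, ν x⟫ ≤ 0) ∧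
      ∀ x ∈ frontier C, ⟪f x, ν x⟫ ≤ 0) :
    ∃ z ∈ C, f z = 0 := by
  obtain ⟨ν, hν, hfν⟩ := hnormal
  obtain ⟨P, hP1, hP2, hP3⟩ := exists_proj C hne hclosed hconv
  obtain ⟨R, hR0, hR⟩ := hbdd.exists_pos_norm_le
  have hPc := hP1.continuous
  obtain ⟨w, hw⟩ := brouwer_ball (fun x => R⁻¹ • P (P (R • x) + f (P (R • x))))
    (by fun_prop) (fun x => by
      rw [norm_smul, norm_inv, Real.norm_of_nonneg hR0.le, inv_mul_le_iff₀ hR0, mul_one]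
      exact hR _ (hP2 _))
  set x := R • w with hx
  have hfix : P (P x + f (P x)) = x := by
    rw [hx]
    nth_rewrite 3 [← hw]
    rw [smul_inv_smul₀ hR0.ne']
  have hxC : x ∈ C := hfix ▸ hP2 _
  have hPx : P x = x := by
    have := hP3 x x hxC
    rw [real_inner_self_nonpos] at this
    exact (sub_eq_zero.1 this).symm
  rw [hPx] at hfix
  have hvi : ∀ u ∈ C, ⟪f x, u - x⟫ ≤ 0 := by
    intro u hu
    have := hP3 (x + f x) u hu
    rwa [hfix, add_sub_cancel_left] at this
  refine ⟨x, hxC, ?_⟩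
  by_contra hfx
  obtain ⟨x0, hx0⟩ := hint
  obtain ⟨ρ', hρ'0, hρ'⟩ := Metric.isOpen_iff.1 isOpen_interior x0 hx0
  set ρ := ρ' / 2 with hρ
  have hρ0 : 0 < ρ := by positivity
  have hlow : ∀ y ∈ frontier C, ρ ≤ ⟪y - x0, ν y⟫ := by
    intro y hy
    have h1 : x0 + ρ • ν y ∈ C := interior_subset (hρ' (by
      rw [Metric.mem_ball, dist_eq_norm, add_sub_cancel_left, norm_smul, (hν y hy).1,
        Real.norm_of_nonneg hρ0.le]
      linarith))
    have h2 := (hν y hy).2 _ h1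
    have h3 : ⟪ν y, ν y⟫ = 1 := by rw [real_inner_self_eq_norm_sq, (hν y hy).1]; norm_num
    simp only [inner_sub_left, inner_add_left, real_inner_smul_left, h3] at h2 ⊢
    linarith
  have hM := hvi x0 (interior_subset hx0)
  set M := ⟪f x, x0 - x⟫ with hMdef
  have hF : 0 < ‖f x‖ ^ 2 := by have := norm_pos_iff.2 hfx; positivity
  obtain ⟨ε, hε0, hε⟩ : ∃ ε > 0, 2 * ε * (-M) < ‖f x‖ ^ 2 := by
    refine ⟨‖f x‖ ^ 2 / (2 * (-M + 1)), div_pos hF (by linarith), ?_⟩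
    have h1 : 0 < -M + 1 := by linarith
    have e : 2 * (‖f x‖ ^ 2 / (2 * (-M + 1))) * (-M) = ‖f x‖ ^ 2 * (-M / (-M + 1)) := by
      field_simp
    rw [e]
    have : -M / (-M + 1) < 1 := by rw [div_lt_one h1]; linarith
    nlinarith
  obtain ⟨η', hη'0, hη'⟩ := Metric.continuousAt_iff.1 (hf.continuousAt (x := x)) (ε * ρ / 2)
    (by positivity)
  set η := min η' (ρ / 2) with hη
  have hη0 : 0 < η := lt_min hη'0 (by positivity)
  set v := f x + ε • (x0 - x) with hv
  have hneg : ∀ y ∈ frontier C, dist y x < η → ⟪v, ν y⟫ < 0 := by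
    intro y hy hyx
    have h1 := hη' (lt_of_lt_of_le hyx (min_le_left _ _))
    have h2 := lt_of_lt_of_le hyx (min_le_right _ _)
    rw [dist_eq_norm] at h1 h2
    have h3 := hfν y hy
    have h4 := hlow y hy
    have h5 := real_inner_le_norm (-(f y - f x)) (ν y)
    have h6 := real_inner_le_norm (y - x) (ν y)
    rw [(hν y hy).1, mul_one] at h5 h6
    rw [norm_neg] at h5
    have e : ⟪v, ν y⟫ = ⟪f y, ν y⟫ + ⟪-(f y - f x), ν y⟫ - ε * ⟪y - x0, ν y⟫
        + ε * ⟪y - x, ν y⟫ := by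
      simp only [hv, inner_add_left, inner_sub_left, real_inner_smul_left, inner_neg_left]
      ring
    rw [e]
    nlinarith [mul_le_mul_of_nonneg_left h4 hε0.le, mul_lt_mul_of_pos_left h2 hε0,
      mul_le_mul_of_nonneg_left h6 hε0.le]
  set K := ε * ‖x0 - x‖ + ‖v‖ with hK
  have hK0 : 0 ≤ K := by positivity
  set t := min (η / (K + 1)) (1 / ε) with ht
  have ht0 : 0 < t := lt_min (by positivity) (by positivity)
  have htK : t * K < η := by
    have h1 : t ≤ η / (K + 1) := min_le_left _ _
    rw [le_div_iff₀ (by positivity)] at h1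
    nlinarith
  have htε : t * ε ≤ 1 := by
    have h1 : t ≤ 1 / ε := min_le_right _ _
    rwa [le_div_iff₀ hε0] at h1
  set q := x + (t * ε) • (x0 - x) with hq
  have hqi : q ∈ interior C :=
    hconv.add_smul_sub_mem_interior hxC hx0 ⟨by positivity, htε⟩
  have hmem : q + t • v ∈ C := by
    by_contra hcon
    have hconn : IsPreconnected ((fun s : ℝ => q + s • v) '' Set.Icc 0 t) :=
      isPreconnected_Icc.image _ (by fun_prop)
    obtain ⟨s, hs, hy⟩ : ∃ s ∈ Set.Icc 0 t, q + s • v ∈ frontier C := by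
      by_contra hno
      push Not at hno
      obtain ⟨z, -, hz1, hz2⟩ := hconn (interior C) Cᶜ isOpen_interior hclosed.isOpen_compl
        (by
          rintro _ ⟨s, hs, rfl⟩
          by_cases hsC : q + s • v ∈ C
          · left
            by_contra hni
            exact hno s hs ⟨subset_closure hsC, hni⟩
          · right
            exact hsC)
        ⟨q, ⟨0, ⟨le_rfl, ht0.le⟩, by simp⟩, hqi⟩
        ⟨q + t • v, ⟨t, ⟨ht0.le, le_rfl⟩, rfl⟩, hcon⟩
      exact hz2 (interior_subset hz1)
    have hdist : dist (q + s • v) x < η := by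
      rw [dist_eq_norm]
      have e : q + s • v - x = (t * ε) • (x0 - x) + s • v := by rw [hq]; abel
      rw [e]
      refine lt_of_le_of_lt (norm_add_le _ _) ?_
      rw [norm_smul, norm_smul, Real.norm_of_nonneg (by positivity), Real.norm_of_nonneg hs.1]
      nlinarith [mul_le_mul_of_nonneg_right hs.2 (norm_nonneg v)]
    have h1 := hneg _ hy hdist
    have h2 := (hν _ hy).2 q (interior_subset hqi)
    rw [sub_add_cancel_left, inner_neg_left, real_inner_smul_left] at h2
    have hs0 : s = 0 := by
      by_contra hs0
      have : 0 < s := lt_of_le_of_ne hs.1 (Ne.symm hs0)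
      nlinarith
    rw [hs0, zero_smul, add_zero] at hy
    exact hy.2 hqi
  have h1 := hvi _ hmem
  have e : ⟪f x, q + t • v - x⟫ = t * (‖f x‖ ^ 2 + 2 * ε * M) := by
    have : q + t • v - x = (2 * t * ε) • (x0 - x) + t • f x := by
      rw [hq, hv]; module
    rw [this, inner_add_right, real_inner_smul_right, real_inner_smul_right,
      real_inner_self_eq_norm_sq]
    ring
  rw [e] at h1
  nlinarith
end

section
/- Let Ω ⊆ ℝ^N be a nonempty open set, f : Ω → ℝ^N continuous, and G an open bounded set with closure cl(G) ⊆ Ω. Suppose there exist a sequence of positive reals (T_k) with T_k → 0⁺ and a sequence of differentiable functions ζ_k : ℝ → ℝ^N such that for each k: ζ_k'(t) = f(ζ_k(t)) for all t ∈ ℝ, ζ_k(t + T_k) = ζ_k(t) for all t ∈ ℝ, and ζ_k(t) ∈ cl(G) for all t ∈ ℝ. Then there exists z* ∈ cl(G) with f(z*) = 0. -/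
open Set Metric

/-- If an autonomous system `ẏ = f(y)` admits `T_k`-periodic solutions
with values in `cl G`, with `T_k > 0` and `T_k → 0`, then `f` has a zero in `cl G`. -/
theorem zero_of_field_from_small_periodic_solutions
    {N : ℕ} (Ω : Set (EuclideanSpace ℝ (Fin N))) (hΩ : IsOpen Ω) (hΩne : Ω.Nonempty)
    (f : EuclideanSpace ℝ (Fin N) → EuclideanSpace ℝ (Fin N))
    (hf : ContinuousOn f Ω)
    (G : Set (EuclideanSpace ℝ (Fin N)))
    (hG : IsOpen G) (hGb : Bornology.IsBounded G) (hGΩ : closure G ⊆ Ω)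
    (T : ℕ → ℝ) (hTpos : ∀ k, 0 < T k)
    (hT0 : Filter.Tendsto T Filter.atTop (nhds 0))
    (ζ : ℕ → ℝ → EuclideanSpace ℝ (Fin N))
    (hsol : ∀ k, ∀ t : ℝ, HasDerivAt (ζ k) (f (ζ k t)) t)
    (hper : ∀ k, ∀ t : ℝ, ζ k (t + T k) = ζ k t)
    (hin : ∀ k, ∀ t : ℝ, ζ k t ∈ closure G) :
    ∃ z ∈ closure G, f z = 0 := by
  have hK : IsCompact (closure G) := hGb.isCompact_closure
  have hfK : ContinuousOn f (closure G) := hf.mono hGΩ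
  obtain ⟨M, hM⟩ := hK.exists_bound_of_continuousOn hfK
  obtain ⟨z, hz, φ, hφ, hlim⟩ := hK.tendsto_subseq (fun k => hin k 0)
  refine ⟨z, hz, ?_⟩
  have hrolle : ∀ k, ∃ s ∈ Set.Ioo (0:ℝ) (T k), inner ℝ (f z) (f (ζ k s)) = 0 := by
    intro k
    have hd : ∀ t, HasDerivAt (fun t => inner ℝ (f z) (ζ k t)) (inner ℝ (f z) (f (ζ k t))) t := by
      intro t
      simpa using (hasDerivAt_const t (f z)).inner ℝ (hsol k t)
    refine exists_hasDerivAt_eq_zero (hTpos k)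
      (fun t _ => (hd t).continuousAt.continuousWithinAt) ?_ (fun t _ => hd t)
    have := hper k 0
    rw [zero_add] at this
    simp only [this]
  choose s hs hs0 using hrolle
  have hbd : ∀ k, ‖ζ k (s k) - ζ k 0‖ ≤ M * T k := by
    intro k
    have h := Convex.norm_image_sub_le_of_norm_hasDerivWithin_le (f := ζ k) (C := M)
      (s := Set.univ) (x := 0) (y := s k)
      (fun t _ => (hsol k t).hasDerivWithinAt) (fun t _ => hM _ (hin k t)) convex_univ
      (Set.mem_univ _) (Set.mem_univ _)
    have hM0 : 0 ≤ M := (norm_nonneg _).trans (hM _ hz)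
    refine h.trans (mul_le_mul_of_nonneg_left ?_ hM0)
    rw [sub_zero, Real.norm_of_nonneg (hs k).1.le]
    exact (hs k).2.le
  have hdiff : Filter.Tendsto (fun k => ζ k (s k) - ζ k 0) Filter.atTop (nhds 0) :=
    squeeze_zero_norm hbd (by simpa using hT0.const_mul M)
  have hconv : Filter.Tendsto (fun k => ζ (φ k) (s (φ k))) Filter.atTop (nhds z) := by
    have := (hdiff.comp hφ.tendsto_atTop).add hlim
    simpa [Function.comp_def] using this
  have hfc : Filter.Tendsto (fun k => f (ζ (φ k) (s (φ k)))) Filter.atTop (nhds (f z)) :=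
    (hfK z hz).tendsto.comp (tendsto_nhdsWithin_iff.2
      ⟨hconv, Filter.Eventually.of_forall fun k => hin _ _⟩)
  have hi := (tendsto_const_nhds (x := f z)).inner (𝕜 := ℝ) hfc
  simp only [hs0] at hi
  exact inner_self_eq_zero.1 (tendsto_nhds_unique hi tendsto_const_nhds)
end

section
/- Let Ω ⊆ ℝ^N be open, f : [0,T] × Ω → ℝ^N continuous, and G an open bounded set with cl(G) ⊆ Ω. Suppose there is a family (V_u)_{u∈∂G} of bounding functions for G such that for each u ∈ ∂G there exists ρ_u ∈ (0, r_u] with ⟨f(t,x), ∇V_u(x)⟩ ≤ 0 for all x ∈ G ∩ B(u, ρ_u) and all t ∈ [0,T]. Then G is strongly flow-invariant: for every τ ∈ (0,T] and every differentiable y : [0,τ] → Ω with y'(t) = f(t, y(t)) for all t ∈ [0,τ] and y(0) ∈ G, one has y(t) ∈ G for all t ∈ [0,τ]. -/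
open Set Metric
open scoped RealInnerProductSpace

/-- strong flow invariance. Under a family of bounding functions for
`G` satisfying the sub-tangential condition `⟪f(t,x), ∇V_u(x)⟫ ≤ 0` near each boundary
point, every solution of `ẏ = f(t,y)` starting in `G` remains in `G`. -/
theorem strong_flow_invariance_of_bounding_functions
    {N : ℕ} {T : ℝ} (hT : 0 < T)
    (Ω : Set (EuclideanSpace ℝ (Fin N))) (hΩ : IsOpen Ω)
    (f : ℝ → EuclideanSpace ℝ (Fin N) → EuclideanSpace ℝ (Fin N))
    (hf : ContinuousOn (fun p : ℝ × EuclideanSpace ℝ (Fin N) => f p.1 p.2)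
      (Icc (0 : ℝ) T ×ˢ Ω))
    (G : Set (EuclideanSpace ℝ (Fin N)))
    (hG : IsOpen G) (hGb : Bornology.IsBounded G) (hGΩ : closure G ⊆ Ω)
    (r : EuclideanSpace ℝ (Fin N) → ℝ)
    (V : EuclideanSpace ℝ (Fin N) → EuclideanSpace ℝ (Fin N) → ℝ)
    (hbd : ∀ u ∈ frontier G, 0 < r u ∧ ContDiffOn ℝ 1 (V u) (ball u (r u)) ∧
      V u u = 0 ∧ ∀ x ∈ G ∩ ball u (r u), V u x < 0)
    (hsub : ∀ u ∈ frontier G, ∃ ρ ∈ Ioc (0 : ℝ) (r u),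
      ∀ t ∈ Icc (0 : ℝ) T, ∀ x ∈ G ∩ ball u ρ,
        ⟪f t x, gradient (V u) x⟫ ≤ 0) :
    ∀ τ ∈ Ioc (0 : ℝ) T, ∀ y : ℝ → EuclideanSpace ℝ (Fin N),
      (∀ t ∈ Icc (0 : ℝ) τ, y t ∈ Ω) →
      (∀ t ∈ Icc (0 : ℝ) τ, HasDerivWithinAt y (f t (y t)) (Icc (0 : ℝ) τ) t) →
      y 0 ∈ G → ∀ t ∈ Icc (0 : ℝ) τ, y t ∈ G := by
  intro τ hτ y hyΩ hy hy0
  by_contra hcon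
  push Not at hcon
  obtain ⟨t1, ht1, hyt1⟩ := hcon
  have hyc : ContinuousOn y (Icc 0 τ) := fun t ht => (hy t ht).continuousWithinAt
  have hS : IsCompact (Icc (0 : ℝ) τ ∩ y ⁻¹' Gᶜ) :=
    isCompact_Icc.of_isClosed_subset
      (hyc.preimage_isClosed_of_isClosed isClosed_Icc hG.isClosed_compl) inter_subset_left
  obtain ⟨t0, ⟨ht0, hyt0⟩, hmin⟩ := hS.exists_isLeast ⟨t1, ht1, hyt1⟩
  have hpos : 0 < t0 := by
    rcases ht0.1.eq_or_lt with h | h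
    · exact absurd (h ▸ hy0) hyt0
    · exact h
  have hlt : ∀ t, 0 ≤ t → t < t0 → y t ∈ G := by
    intro t h0 h1
    by_contra hc
    exact absurd (hmin ⟨⟨h0, h1.le.trans ht0.2⟩, hc⟩) (not_le.2 h1)
  have hcl : y t0 ∈ closure G := by
    have h1 : ContinuousWithinAt y (Ico 0 t0) t0 :=
      (hyc t0 ht0).mono (fun t ht => ⟨ht.1, ht.2.le.trans ht0.2⟩)
    refine h1.mem_closure ?_ (fun t ht => hlt t ht.1 ht.2)
    rw [closure_Ico hpos.ne]
    exact ⟨hpos.le, le_rfl⟩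
  have hfr : y t0 ∈ frontier G := by
    rw [hG.frontier_eq]
    exact ⟨hcl, hyt0⟩
  obtain ⟨hr, hVc, hV0, hVneg⟩ := hbd _ hfr
  obtain ⟨ρ, hρ, hin⟩ := hsub _ hfr
  obtain ⟨δ, hδ, hball⟩ := Metric.continuousWithinAt_iff.1 (hyc t0 ht0) ρ hρ.1
  obtain ⟨s, hs1, hs2⟩ : ∃ s, max 0 (t0 - δ) < s ∧ s < t0 :=
    exists_between (max_lt hpos (by linarith))
  have hs0 : 0 < s := (le_max_left _ _).trans_lt hs1
  have hsδ : t0 - δ < s := (le_max_right _ _).trans_lt hs1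
  have hsub' : Icc s t0 ⊆ Icc 0 τ := fun t ht => ⟨hs0.le.trans ht.1, ht.2.trans ht0.2⟩
  have hyb : ∀ t ∈ Icc s t0, y t ∈ ball (y t0) ρ := by
    intro t ht
    refine hball (hsub' ht) ?_
    rw [Real.dist_eq, abs_lt]
    constructor <;> linarith [ht.1, ht.2]
  have hbb : ball (y t0) ρ ⊆ ball (y t0) (r (y t0)) := ball_subset_ball hρ.2
  have hder : ∀ t ∈ Ioo s t0, HasDerivAt (fun t => V (y t0) (y t))
      (⟪f t (y t), gradient (V (y t0)) (y t)⟫) t := by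
    intro t ht
    have htI := Ioo_subset_Icc_self ht
    have hyd : HasDerivAt y (f t (y t)) t :=
      (hy t (hsub' htI)).hasDerivAt
        (Icc_mem_nhds (hs0.trans ht.1) (ht.2.trans_le ht0.2))
    have hVd : DifferentiableAt ℝ (V (y t0)) (y t) :=
      (hVc.differentiableOn one_ne_zero).differentiableAt
        (isOpen_ball.mem_nhds (hbb (hyb t htI)))
    have h := hVd.hasFDerivAt.comp_hasDerivAt t hyd
    rw [real_inner_comm]
    have he : ⟪gradient (V (y t0)) (y t), f t (y t)⟫ = fderiv ℝ (V (y t0)) (y t) (f t (y t)) := by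
      simp
    rw [he]
    exact h
  have hanti : AntitoneOn (fun t => V (y t0) (y t)) (Icc s t0) := by
    apply antitoneOn_of_deriv_nonpos (convex_Icc _ _)
    · exact hVc.continuousOn.comp (hyc.mono hsub') (fun t ht => hbb (hyb t ht))
    · rw [interior_Icc]
      exact fun t ht => (hder t ht).differentiableAt.differentiableWithinAt
    · rw [interior_Icc]
      intro t ht
      rw [(hder t ht).deriv]
      have htI := Ioo_subset_Icc_self ht
      have h1 := hsub' htI
      exact hin t ⟨h1.1, h1.2.trans hτ.2⟩ _ ⟨hlt t h1.1 ht.2, hyb t htI⟩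
  have h1 := hanti (left_mem_Icc.2 hs2.le) (right_mem_Icc.2 hs2.le) hs2.le
  have h2 := hVneg (y s) ⟨hlt s hs0.le hs2, hbb (hyb s (left_mem_Icc.2 hs2.le))⟩
  simp only [hV0] at h1
  linarith
end

section
/- Let Ω ⊆ ℝ^N be open, f : [0,T] × Ω → ℝ^N continuous, and G an open bounded set with cl(G) ⊆ Ω. Suppose there is a family (V_u)_{u∈∂G} of bounding functions for G such that for each u ∈ ∂G there exists ρ_u ∈ (0, r_u] with ⟨f(t,x), ∇V_u(x)⟩ ≤ 0 for all x ∈ G ∩ B(u, ρ_u) and all t ∈ [0,T]. Then cl(G) is weakly flow-invariant: for each x₀ ∈ ∂G there exists a differentiable y : [0,T] → Ω with y(0) = x₀, y'(t) = f(t, y(t)) for all t ∈ [0,T], and y(t) ∈ cl(G) for all t ∈ [0,T]. -/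
open Set Metric
open scoped RealInnerProductSpace

section aux
open Filter Topology MeasureTheory
open scoped NNReal

theorem aux_extract {E : Type*} [NormedAddCommGroup E] [ProperSpace E] {T : ℝ} (hT : 0 < T)
    {M : ℝ≥0} (y : ℕ → ℝ → E) (hy : ∀ n, LipschitzWith M (y n)) (x : ℕ → E) (x₀ : E)
    (hx : Tendsto x atTop (𝓝 x₀)) (hyx : ∀ n, y n 0 = x n) :
    ∃ (φ : ℕ → ℕ) (z : ℝ → E), StrictMono φ ∧ LipschitzWith M z ∧
      ∀ t ∈ Icc 0 T, Tendsto (fun n => y (φ n) t) atTop (𝓝 (z t)) := by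
  have hb := Metric.isBounded_range_of_tendsto x hx
  obtain ⟨R, hR⟩ := hb.subset_closedBall 0
  let Y : ℕ → BoundedContinuousFunction (Icc (0:ℝ) T) E := fun n =>
    BoundedContinuousFunction.mkOfCompact ⟨fun t => y n t, by
      have := (hy n).continuous
      fun_prop⟩
  have hYc : IsCompact (closure (range Y)) := by
    refine BoundedContinuousFunction.arzela_ascoli (closedBall 0 (R + M * T))
      (isCompact_closedBall _ _) _ ?_ ?_
    · rintro _ t ⟨n, rfl⟩
      have h1 : ‖x n‖ ≤ R := by simpa using hR ⟨n, rfl⟩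
      have h2 := (hy n).dist_le_mul t 0
      rw [hyx, dist_eq_norm, dist_eq_norm, sub_zero, Real.norm_of_nonneg t.2.1] at h2
      have h3 : (M:ℝ) * t ≤ M * T := by gcongr; exact t.2.2
      have h4 : ‖y n t‖ ≤ ‖y n t - x n‖ + ‖x n‖ := by
        simpa using norm_add_le (y n t - x n) (x n)
      simp only [mem_closedBall_zero_iff]
      change ‖y n t‖ ≤ _
      linarith
    · refine Metric.equicontinuous_of_continuity_modulus (fun d => M * d) ?_ _ ?_
      · have : Continuous (fun d : ℝ => (M:ℝ) * d) := by fun_prop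
        simpa using this.tendsto 0
      · rintro s t ⟨_, n, rfl⟩
        exact (hy n).dist_le_mul s t
  obtain ⟨Z, -, φ, hφ, hZ⟩ := hYc.tendsto_subseq (x := Y) (fun n => subset_closure ⟨n, rfl⟩)
  have hpt : ∀ t : Icc (0:ℝ) T, Tendsto (fun n => y (φ n) t) atTop (𝓝 (Z t)) := by
    intro t
    have : Continuous (fun g : BoundedContinuousFunction (Icc (0:ℝ) T) E => g t) :=
      by fun_prop
    exact (this.tendsto Z).comp hZ
  refine ⟨φ, fun t => Z (projIcc 0 T hT.le t), hφ, ?_, ?_⟩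
  · refine LipschitzWith.of_dist_le_mul fun s t => ?_
    have h1 : dist (Z (projIcc 0 T hT.le s)) (Z (projIcc 0 T hT.le t)) ≤
        M * dist (projIcc 0 T hT.le s) (projIcc 0 T hT.le t) := by
      refine le_of_tendsto ((hpt _).dist (hpt _)) (Eventually.of_forall fun n => ?_)
      exact (hy _).dist_le_mul _ _
    refine h1.trans ?_
    gcongr
    simpa using (LipschitzWith.projIcc hT.le).dist_le_mul s t
  · intro t ht
    have := hpt ⟨t, ht⟩
    simpa [projIcc_of_mem hT.le ht] using this

theorem aux_limit {E : Type*} [NormedAddCommGroup E] [NormedSpace ℝ E] [ProperSpace E]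
    {T : ℝ} (hT : 0 < T)
    {M : ℝ≥0} (F : ℝ × E → E) (hF : Continuous F) (hFM : ∀ p, ‖F p‖ ≤ M)
    (y : ℕ → ℝ → E) (hy : ∀ n, LipschitzWith M (y n)) (x : ℕ → E) (x₀ : E)
    (hx : Tendsto x atTop (𝓝 x₀)) (δ : ℕ → ℝ) (hδ : Tendsto δ atTop (𝓝 0))
    (hyx : ∀ n, ∀ t ∈ Icc 0 T, y n t = x n + ∫ s in (0:ℝ)..t, F (s, y n (s - δ n))) :
    ∃ (φ : ℕ → ℕ) (z : ℝ → E), StrictMono φ ∧ LipschitzWith M z ∧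
      (∀ t ∈ Icc 0 T, Tendsto (fun n => y (φ n) t) atTop (𝓝 (z t))) ∧
      ∀ t ∈ Icc 0 T, z t = x₀ + ∫ s in (0:ℝ)..t, F (s, z s) := by
  obtain ⟨φ, z, hφ, hz, hlim⟩ := aux_extract hT y hy x x₀ hx (fun n => by
    simpa using hyx n 0 ⟨le_rfl, hT.le⟩)
  refine ⟨φ, z, hφ, hz, hlim, fun t ht => ?_⟩
  have hφt := hφ.tendsto_atTop
  refine tendsto_nhds_unique (hlim t ht) ?_
  simp_rw [hyx _ t ht]
  refine (hx.comp hφt).add ?_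
  refine intervalIntegral.tendsto_integral_filter_of_dominated_convergence (fun _ => (M:ℝ))
    (Eventually.of_forall fun n => ?_)
    (Eventually.of_forall fun n => Eventually.of_forall fun s _ => hFM _)
    intervalIntegrable_const (Eventually.of_forall fun s hs => ?_)
  · have := (hy (φ n)).continuous
    exact Continuous.aestronglyMeasurable (by fun_prop)
  · rw [uIoc_of_le ht.1] at hs
    have hs' : s ∈ Icc 0 T := ⟨hs.1.le, hs.2.trans ht.2⟩
    refine (hF.tendsto (s, z s)).comp (tendsto_const_nhds.prodMk_nhds ?_)
    have h0 : Tendsto (fun n => y (φ n) (s - δ (φ n)) - y (φ n) s) atTop (𝓝 0) := by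
      refine squeeze_zero_norm (a := fun n => M * ‖δ (φ n)‖) (fun n => ?_) ?_
      · have := (hy (φ n)).dist_le_mul (s - δ (φ n)) s
        rw [dist_eq_norm, dist_eq_norm] at this
        simpa using this
      · simpa using (hδ.comp hφt).norm.const_mul (M:ℝ)
    simpa using h0.add (hlim s hs')

theorem aux_tonelli {E : Type*} [NormedAddCommGroup E] [NormedSpace ℝ E] [CompleteSpace E]
    {T : ℝ} {M : ℝ≥0} (F : ℝ × E → E) (hF : Continuous F) (hFM : ∀ p, ‖F p‖ ≤ M)
    (x : E) (δ : ℝ) (hδ : 0 < δ) :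
    ∃ y : ℝ → E, LipschitzWith M y ∧
      ∀ t ∈ Icc 0 T, y t = x + ∫ s in (0:ℝ)..t, F (s, y (s - δ)) := by
  let Φ : (ℝ → E) → (ℝ → E) := fun y t => x + ∫ s in (0:ℝ)..(max t 0), F (s, y (s - δ))
  have hLip : ∀ k, LipschitzWith M (Φ^[k] (fun _ => x)) := by
    intro k
    induction k with
    | zero => exact (LipschitzWith.const x).weaken zero_le
    | succ k ih =>
      rw [Function.iterate_succ_apply']
      have hc := ih.continuous
      set w := Φ^[k] (fun _ => x)
      have hc' : Continuous (fun s => F (s, w (s - δ))) := by fun_prop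
      refine LipschitzWith.of_dist_le_mul fun s t => ?_
      simp only [Φ, dist_add_left]
      rw [dist_eq_norm, intervalIntegral.integral_interval_sub_left
        (hc'.intervalIntegrable _ _) (hc'.intervalIntegrable _ _)]
      refine (intervalIntegral.norm_integral_le_of_norm_le_const (C := M)
        (fun _ _ => hFM _)).trans ?_
      gcongr
      exact abs_max_sub_max_le_abs s t 0
  have hst : ∀ k : ℕ, ∀ t ≤ k * δ, Φ^[k+1] (fun _ => x) t = Φ^[k] (fun _ => x) t := by
    intro k
    induction k with
    | zero => 
      intro t ht
      simp only [Nat.cast_zero, zero_mul] at ht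
      simp [Φ, ht]
    | succ k ih =>
      intro t ht
      rw [Function.iterate_succ_apply', Function.iterate_succ_apply' Φ k]
      simp only [Φ]
      congr 1
      refine intervalIntegral.integral_congr fun s hs => ?_
      rw [uIcc_of_le (le_max_right _ _)] at hs
      have hk : (0:ℝ) ≤ k * δ := by positivity
      push_cast at ht
      have h2 : s ≤ (k + 1) * δ := hs.2.trans (max_le ht (by positivity))
      have := ih (s - δ) (by linarith)
      rw [Function.iterate_succ_apply'] at this
      exact congrArg (fun v => F (s, v)) this
  obtain ⟨k, hk⟩ := exists_nat_ge (T / δ)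
  refine ⟨_, hLip k, fun t ht => ?_⟩
  rw [div_le_iff₀ hδ] at hk
  rw [← hst k t (ht.2.trans hk), Function.iterate_succ_apply']
  simp [Φ, ht.1]

theorem aux_peano {E : Type*} [NormedAddCommGroup E] [NormedSpace ℝ E] [ProperSpace E]
    {T : ℝ} (hT : 0 < T) {M : ℝ≥0} (F : ℝ × E → E) (hF : Continuous F) (hFM : ∀ p, ‖F p‖ ≤ M)
    (x : E) :
    ∃ y : ℝ → E, LipschitzWith M y ∧
      ∀ t ∈ Icc 0 T, y t = x + ∫ s in (0:ℝ)..t, F (s, y s) := by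
  choose y hy hyx using fun n : ℕ =>
    aux_tonelli (T := T) F hF hFM x (1 / ((n:ℝ) + 1)) (by positivity)
  obtain ⟨φ, z, -, hz, -, h⟩ := aux_limit hT F hF hFM y hy (fun _ => x) x tendsto_const_nhds
    (fun n : ℕ => 1 / ((n:ℝ) + 1)) tendsto_one_div_add_atTop_nhds_zero_nat hyx
  exact ⟨z, hz, h⟩

theorem aux_deriv {E : Type*} [NormedAddCommGroup E] [NormedSpace ℝ E] [CompleteSpace E]
    {T : ℝ} (F : ℝ × E → E) (hF : Continuous F) (x : E) (y : ℝ → E) (hy : Continuous y)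
    (h : ∀ t ∈ Icc 0 T, y t = x + ∫ s in (0:ℝ)..t, F (s, y s)) :
    ∀ t ∈ Icc 0 T, HasDerivWithinAt y (F (t, y t)) (Icc 0 T) t := by
  intro t ht
  have hc : Continuous (fun s => F (s, y s)) := by fun_prop
  have h1 : HasDerivAt (fun t => x + ∫ s in (0:ℝ)..t, F (s, y s)) (F (t, y t)) t :=
    (hc.integral_hasStrictDerivAt 0 t).hasDerivAt.const_add x
  exact h1.hasDerivWithinAt.congr h (h t ht)

end aux

/-- weak flow invariance of the closure. Under a family of bounding
functions for `G` satisfying the sub-tangential condition near each boundary point,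
from each point of `∂G` there starts at least one solution of `ẏ = f(t,y)` defined on
`[0,T]` and remaining in `cl G`. -/
theorem weak_flow_invariance_of_bounding_functions
    {N : ℕ} {T : ℝ} (hT : 0 < T)
    (Ω : Set (EuclideanSpace ℝ (Fin N))) (hΩ : IsOpen Ω)
    (f : ℝ → EuclideanSpace ℝ (Fin N) → EuclideanSpace ℝ (Fin N))
    (hf : ContinuousOn (fun p : ℝ × EuclideanSpace ℝ (Fin N) => f p.1 p.2)
      (Icc (0 : ℝ) T ×ˢ Ω))
    (G : Set (EuclideanSpace ℝ (Fin N)))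
    (hG : IsOpen G) (hGb : Bornology.IsBounded G) (hGΩ : closure G ⊆ Ω)
    (r : EuclideanSpace ℝ (Fin N) → ℝ)
    (V : EuclideanSpace ℝ (Fin N) → EuclideanSpace ℝ (Fin N) → ℝ)
    (hbd : ∀ u ∈ frontier G, 0 < r u ∧ ContDiffOn ℝ 1 (V u) (ball u (r u)) ∧
      V u u = 0 ∧ ∀ x ∈ G ∩ ball u (r u), V u x < 0)
    (hsub : ∀ u ∈ frontier G, ∃ ρ ∈ Ioc (0 : ℝ) (r u),
      ∀ t ∈ Icc (0 : ℝ) T, ∀ x ∈ G ∩ ball u ρ,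
        ⟪f t x, gradient (V u) x⟫ ≤ 0) :
    ∀ x₀ ∈ frontier G, ∃ y : ℝ → EuclideanSpace ℝ (Fin N),
      y 0 = x₀ ∧
      (∀ t ∈ Icc (0 : ℝ) T, y t ∈ Ω) ∧
      (∀ t ∈ Icc (0 : ℝ) T, HasDerivWithinAt y (f t (y t)) (Icc (0 : ℝ) T) t) ∧
      (∀ t ∈ Icc (0 : ℝ) T, y t ∈ closure G) := by
  intro x₀ hx₀
  have hcl : IsCompact (closure G) := hGb.isCompact_closure
  set C : Set (ℝ × EuclideanSpace ℝ (Fin N)) := Icc (0:ℝ) T ×ˢ closure G with hC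
  have hCc : IsCompact C := isCompact_Icc.prod hcl
  have hfC : ContinuousOn (fun p : ℝ × EuclideanSpace ℝ (Fin N) => f p.1 p.2) C :=
    hf.mono (prod_mono le_rfl hGΩ)
  obtain ⟨M₀, hM₀⟩ := hCc.exists_bound_of_continuousOn hfC
  let M : NNReal := ⟨max M₀ 1, le_trans zero_le_one (le_max_right _ _)⟩
  have hMpos : (0:ℝ) < M := lt_of_lt_of_le zero_lt_one (le_max_right M₀ 1)
  haveI : TietzeExtension (closedBall (0 : EuclideanSpace ℝ (Fin N)) (M:ℝ)) :=
    Metric.instTietzeExtensionClosedBall ℝ 0 hMpos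
  obtain ⟨F, hFM, hFf⟩ := ContinuousMap.exists_forall_mem_restrict_eq hCc.isClosed
    (⟨_, hfC.restrict⟩ : C(C, EuclideanSpace ℝ (Fin N)))
    (t := closedBall (0 : EuclideanSpace ℝ (Fin N)) (M:ℝ))
    (fun p => by
      simp only [mem_closedBall_zero_iff]
      exact (hM₀ p.1 p.2).trans (le_max_left _ _))
  have hFM' : ∀ p, ‖F p‖ ≤ M := fun p => by simpa using hFM p
  have hFeq : ∀ t ∈ Icc (0:ℝ) T, ∀ x ∈ closure G, F (t, x) = f t x := by
    intro t ht x hx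
    exact congrArg (fun g : C(C, EuclideanSpace ℝ (Fin N)) => g ⟨(t, x), ht, hx⟩) hFf
  -- invariance of G
  have hinv : ∀ x ∈ G, ∀ y : ℝ → EuclideanSpace ℝ (Fin N), Continuous y →
      (∀ t ∈ Icc 0 T, y t = x + ∫ s in (0:ℝ)..t, F (s, y s)) →
      ∀ t ∈ Icc 0 T, y t ∈ G := by
    intro x hx y hyc hy
    by_contra! hcon
    obtain ⟨t₁, ht₁, ht₁G⟩ := hcon
    have hder := aux_deriv F F.continuous x y hyc hy
    let S : Set ℝ := Icc 0 T ∩ y ⁻¹' Gᶜ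
    have hS : IsCompact S := isCompact_Icc.inter_right (hG.isClosed_compl.preimage hyc)
    obtain ⟨τ, ⟨hτ, hτG⟩, hτmin⟩ := hS.exists_isLeast ⟨t₁, ht₁, ht₁G⟩
    have hy0 : y 0 = x := by simpa using hy 0 ⟨le_rfl, hT.le⟩
    have hτ0 : 0 < τ := by
      rcases hτ.1.lt_or_eq with h | h
      · exact h
      · exfalso; apply hτG; rw [← h, hy0]; exact hx
    have hlt : ∀ t, 0 ≤ t → t < τ → y t ∈ G := by
      intro t h0 h1
      by_contra h
      exact absurd (hτmin ⟨⟨h0, h1.le.trans hτ.2⟩, h⟩) (not_le.2 h1)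
    have hucl : y τ ∈ closure G := by
      have h1 : Filter.Tendsto y (nhdsWithin τ (Iio τ)) (nhds (y τ)) :=
        hyc.continuousAt.mono_left nhdsWithin_le_nhds
      refine mem_closure_of_tendsto h1 ?_
      filter_upwards [Ioo_mem_nhdsLT hτ0] with t ht using hlt t ht.1.le ht.2
    have hu : y τ ∈ frontier G := by
      rw [hG.frontier_eq]; exact ⟨hucl, hτG⟩
    obtain ⟨hr, hV, hV0, hVneg⟩ := hbd _ hu
    obtain ⟨ρ, ⟨hρ0, hρr⟩, hρ⟩ := hsub _ hu
    obtain ⟨ε, hε, hεb⟩ := Metric.continuousAt_iff.1 (hyc.continuousAt (x := τ)) ρ hρ0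
    obtain ⟨a, ha1, ha2⟩ := exists_between (max_lt hτ0 (sub_lt_self τ hε))
    have ha0 : 0 < a := (le_max_left _ _).trans_lt ha1
    have haε : τ - ε < a := (le_max_right _ _).trans_lt ha1
    have hball : ∀ t ∈ Icc a τ, y t ∈ ball (y τ) ρ := by
      intro t ht
      apply hεb
      rw [Real.dist_eq, abs_lt]
      constructor <;> linarith [ht.1, ht.2]
    have hballr : ∀ t ∈ Icc a τ, y t ∈ ball (y τ) (r (y τ)) := fun t ht =>
      ball_subset_ball hρr (hball t ht)
    have hd : ∀ t ∈ Ioo a τ, ∃ c ≤ (0:ℝ), HasDerivAt (fun t => V (y τ) (y t)) c t := by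
      intro t ht
      have ht' : t ∈ Icc a τ := Ioo_subset_Icc_self ht
      have h0 : 0 < t := ha0.trans ht.1
      have htT : t < T := ht.2.trans_le hτ.2
      have hyd : HasDerivAt y (F (t, y t)) t :=
        (hder t ⟨h0.le, htT.le⟩).hasDerivAt (Icc_mem_nhds h0 htT)
      have hyG := hlt t h0.le ht.2
      have hVd : DifferentiableAt ℝ (V (y τ)) (y t) :=
        ((hV.differentiableOn one_ne_zero).differentiableAt
          (isOpen_ball.mem_nhds (hballr t ht')))
      refine ⟨_, ?_, hVd.hasGradientAt.hasFDerivAt.comp_hasDerivAt t hyd⟩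
      have := hρ t ⟨h0.le, htT.le⟩ (y t) ⟨hyG, hball t ht'⟩
      rw [hFeq t ⟨h0.le, htT.le⟩ _ (subset_closure hyG)]
      simpa [real_inner_comm] using this
    have hanti : AntitoneOn (fun t => V (y τ) (y t)) (Icc a τ) := by
      refine antitoneOn_of_deriv_nonpos (convex_Icc a τ) ?_ ?_ ?_
      · exact hV.continuousOn.comp hyc.continuousOn hballr
      · rw [interior_Icc]
        intro t ht
        obtain ⟨c, -, hc⟩ := hd t ht
        exact hc.differentiableAt.differentiableWithinAt
      · rw [interior_Icc]
        intro t ht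
        obtain ⟨c, hc0, hc⟩ := hd t ht
        rw [hc.deriv]; exact hc0
    have h1 := hanti ⟨le_rfl, ha2.le⟩ ⟨ha2.le, le_rfl⟩ ha2.le
    have h2 := hVneg (y a) ⟨hlt a ha0.le ha2, hballr a ⟨le_rfl, ha2.le⟩⟩
    simp only [hV0] at h1
    linarith
  obtain ⟨x, hxG, hx⟩ := mem_closure_iff_seq_limit.1 (frontier_subset_closure hx₀)
  choose y hyL hy using fun n => aux_peano hT F F.continuous hFM' (x n)
  obtain ⟨φ, z, -, hzL, hlim, hz⟩ := aux_limit hT F F.continuous hFM' y hyL x x₀ hx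
    (fun _ => 0) tendsto_const_nhds (by simpa using hy)
  have hzcl : ∀ t ∈ Icc 0 T, z t ∈ closure G := fun t ht =>
    mem_closure_of_tendsto (hlim t ht) (Filter.Eventually.of_forall fun n =>
      hinv _ (hxG _) _ (hyL _).continuous (hy _) t ht)
  refine ⟨z, by simpa using hz 0 ⟨le_rfl, hT.le⟩, fun t ht => hGΩ (hzcl t ht), fun t ht => ?_, hzcl⟩
  rw [← hFeq t ht _ (hzcl t ht)]
  exact aux_deriv F F.continuous x₀ z hzL.continuous hz t ht
end

section
/- Let Ω ⊆ ℝ^N be open, f : [0,T] × Ω → ℝ^N continuous, and G an open bounded set with cl(G) ⊆ Ω. Suppose there is a family (V_u)_{u∈∂G} of bounding functions for G such that for each u ∈ ∂G there exists ρ_u ∈ (0, r_u] with ⟨f(t,x), ∇V_u(x)⟩ ≤ 0 for all x ∈ G ∩ B(u, ρ_u) and all t ∈ [0,T]. Assume moreover that cl(G) is homeomorphic to a closed ball of ℝ^N and that solutions of the Cauchy problems for ẏ = f(t,y) with initial value in cl(G) are unique (i.e. any two solutions defined on a common subinterval of [0,T] that agree at one point of the interval and take values in cl(G) coincide on that interval).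 Then there exists a differentiable y : [0,T] → Ω with y'(t) = f(t, y(t)) for all t ∈ [0,T], y(0) = y(T), and y(t) ∈ cl(G) for all t ∈ [0,T]. -/
open Set Metric
open scoped RealInnerProductSpace

open Polynomial in
theorem bw_det_poly {N : ℕ} (A : EuclideanSpace ℝ (Fin N) →L[ℝ] EuclideanSpace ℝ (Fin N)) :
    ∃ p : ℝ[X], p.natDegree ≤ N ∧ ∀ t : ℝ,
      p.eval t = (ContinuousLinearMap.id ℝ (EuclideanSpace ℝ (Fin N)) + t • A).det := by
  let b := (EuclideanSpace.basisFun (Fin N) ℝ).toBasis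
  let M := LinearMap.toMatrix b b (A : EuclideanSpace ℝ (Fin N) →ₗ[ℝ] EuclideanSpace ℝ (Fin N))
  refine ⟨Matrix.det ((X : ℝ[X]) • M.map C + (1 : Matrix (Fin N) (Fin N) ℝ).map C), ?_, ?_⟩
  · simpa using Polynomial.natDegree_det_X_add_C_le M 1
  · intro t
    rw [ContinuousLinearMap.det, ← LinearMap.det_toMatrix b, ← Polynomial.coe_evalRingHom,
      RingHom.map_det]
    congr 1
    ext i j
    by_cases h : i = j
    · subst h
      simp [M, LinearMap.toMatrix_apply, b]
      ring
    · simp [M, LinearMap.toMatrix_apply, b, h]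
      ring

theorem bw_interp {N : ℕ} (v : Fin (N+1) → ℝ) (hv : Function.Injective v) :
    ∃ w : Fin (N+1) → ℝ, ∑ i, w i = 1 ∧
      ∀ A : EuclideanSpace ℝ (Fin N) →L[ℝ] EuclideanSpace ℝ (Fin N),
        (ContinuousLinearMap.id ℝ (EuclideanSpace ℝ (Fin N)) + (1:ℝ) • A).det =
        ∑ i, w i * (ContinuousLinearMap.id ℝ (EuclideanSpace ℝ (Fin N)) + v i • A).det := by
  refine ⟨fun i => (Lagrange.basis Finset.univ v i).eval 1, ?_, ?_⟩
  · have := Lagrange.sum_basis (s := Finset.univ) (v := v) hv.injOn Finset.univ_nonempty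
    have := congrArg (Polynomial.eval 1) this
    simpa [Polynomial.eval_finsetSum] using this
  · intro A
    obtain ⟨p, hp, hpe⟩ := bw_det_poly A
    have := Lagrange.eq_interpolate (s := Finset.univ) (v := v) hv.injOn (f := p) (by
      refine lt_of_le_of_lt Polynomial.degree_le_natDegree ?_
      simp
      exact_mod_cast Nat.lt_succ_of_le hp)
    have := congrArg (Polynomial.eval 1) this
    rw [Lagrange.interpolate_apply] at this
    simp only [Polynomial.eval_finsetSum, Polynomial.eval_mul, Polynomial.eval_C, hpe] at this
    rw [this]
    exact Finset.sum_congr rfl fun i _ => mul_comm _ _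

/-- radial retraction -/
noncomputable def bwProj {N : ℕ} (x : EuclideanSpace ℝ (Fin N)) : EuclideanSpace ℝ (Fin N) :=
  (max 1 ‖x‖)⁻¹ • x

theorem bwProj_mem {N : ℕ} (x : EuclideanSpace ℝ (Fin N)) : ‖bwProj x‖ ≤ 1 := by
  have h : 0 < max 1 ‖x‖ := by positivity
  rw [bwProj, norm_smul, Real.norm_eq_abs, abs_of_pos (by positivity), inv_mul_le_iff₀ h]
  simp

theorem bwProj_of_le {N : ℕ} {x : EuclideanSpace ℝ (Fin N)} (hx : ‖x‖ ≤ 1) : bwProj x = x := by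
  rw [bwProj, max_eq_left hx]; simp

theorem bwProj_of_ge {N : ℕ} {x : EuclideanSpace ℝ (Fin N)} (hx : 1 ≤ ‖x‖) : ‖bwProj x‖ = 1 := by
  rw [bwProj, max_eq_right hx, norm_smul, norm_inv, norm_norm]
  exact inv_mul_cancel₀ (by linarith)

theorem bwProj_lip {N : ℕ} (x y : EuclideanSpace ℝ (Fin N)) :
    ‖bwProj x - bwProj y‖ ≤ 2 * ‖x - y‖ := by
  set a := max 1 ‖x‖ with ha
  set b := max 1 ‖y‖ with hb
  have ha1 : 1 ≤ a := le_max_left _ _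
  have hb1 : 1 ≤ b := le_max_left _ _
  have hyb : ‖y‖ ≤ b := le_max_right _ _
  have hab : |b - a| ≤ ‖x - y‖ := by
    have h1 : |b - a| ≤ |‖y‖ - ‖x‖| := by
      have := abs_max_sub_max_le_max 1 ‖y‖ 1 ‖x‖
      simpa [ha, hb] using this
    exact h1.trans (by rw [norm_sub_rev]; exact abs_norm_sub_norm_le y x)
  have e : bwProj x - bwProj y = a⁻¹ • ((x - y) + ((b - a) * b⁻¹) • y) := by
    have hb0 : b ≠ 0 := by positivity
    have ha0 : a ≠ 0 := by positivity
    simp only [bwProj, ← ha, ← hb, smul_sub, smul_smul, sub_add]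
    rw [← sub_smul]
    congr 2
    field_simp
    ring
  rw [e, norm_smul, Real.norm_eq_abs, abs_of_pos (by positivity), inv_mul_le_iff₀ (by positivity)]
  have h2 : ‖((b - a) * b⁻¹) • y‖ ≤ ‖x - y‖ := by
    rw [norm_smul, Real.norm_eq_abs, abs_mul, abs_of_pos (a := b⁻¹) (by positivity), mul_assoc]
    have : b⁻¹ * ‖y‖ ≤ 1 := by rw [inv_mul_le_iff₀ (by positivity)]; simpa
    calc |b - a| * (b⁻¹ * ‖y‖) ≤ |b - a| * 1 := by gcongr
      _ ≤ _ := by simpa using hab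
  calc _ ≤ ‖x - y‖ + ‖((b - a) * b⁻¹) • y‖ := norm_add_le _ _
    _ ≤ 1 * (2 * ‖x - y‖) := by linarith
    _ ≤ _ := by gcongr

open MeasureTheory in
theorem bw_no_retract {N : ℕ} (s : EuclideanSpace ℝ (Fin N) → EuclideanSpace ℝ (Fin N))
    (hs : ∀ x, ‖x‖ ≤ 1 → ContDiffAt ℝ 1 s x)
    (hid : ∀ x, ‖x‖ = 1 → s x = x) (hn : ∀ x, ‖x‖ ≤ 1 → ‖s x‖ = 1) : False := by
  let E := EuclideanSpace ℝ (Fin N)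
  have hsd : ∀ x : E, ‖x‖ ≤ 1 → HasFDerivAt s (fderiv ℝ s x) x := fun x hx =>
    ((hs x hx).differentiableAt (by simp)).hasFDerivAt
  let A : E → E →L[ℝ] E := fun x => fderiv ℝ s x - ContinuousLinearMap.id ℝ E
  have hAc : ContinuousOn A (closedBall (0:E) 1) := by
    intro x hx
    have hx : ‖x‖ ≤ 1 := by simpa using hx
    refine ContinuousAt.continuousWithinAt ?_
    exact (((hs x hx).fderiv_right (m := 0) (by simp)).continuousAt).sub continuousAt_const
  -- Lipschitz
  obtain ⟨K, hK⟩ : ∃ K, LipschitzOnWith K (fun x => s x - x) (closedBall (0:E) 1) := by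
    refine ContDiffOn.exists_lipschitzOnWith (n := 1) ?_ (by simp) (convex_closedBall _ _)
      (isCompact_closedBall _ _)
    intro x hx
    have hx : ‖x‖ ≤ 1 := by simpa using hx
    exact ((hs x hx).sub contDiffAt_id).contDiffWithinAt
  let φ : E → E := fun x => s (bwProj x) - bwProj x
  have hφ : ∀ x y, ‖φ x - φ y‖ ≤ (2 * K + 1) * ‖x - y‖ := by
    intro x y
    have h1 := hK.dist_le_mul (bwProj x) (by simpa using bwProj_mem x) (bwProj y)
      (by simpa using bwProj_mem y)
    rw [dist_eq_norm, dist_eq_norm] at h1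
    have h2 := bwProj_lip x y
    have hK0 : (0:ℝ) ≤ K := K.2
    have h3 := norm_nonneg (x - y)
    calc _ ≤ K * ‖bwProj x - bwProj y‖ := h1
      _ ≤ K * (2 * ‖x - y‖) := by gcongr
      _ ≤ _ := by nlinarith
  have hφ0 : ∀ x, 1 ≤ ‖x‖ → φ x = 0 := fun x hx => by
    simp only [φ]; rw [hid _ (bwProj_of_ge hx), sub_self]
  -- bound on A
  obtain ⟨C, hC⟩ := (isCompact_closedBall (0:E) 1).exists_bound_of_continuousOn hAc
  -- det positive
  obtain ⟨δ, hδ, hdet⟩ : ∃ δ > 0, ∀ B : E →L[ℝ] E, ‖B‖ < δ →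
      0 < (ContinuousLinearMap.id ℝ E + B).det := by
    have hc : Continuous fun B : E →L[ℝ] E => (ContinuousLinearMap.id ℝ E + B).det :=
      ContinuousLinearMap.continuous_det.comp (continuous_const.add continuous_id)
    have h0 : 0 < (ContinuousLinearMap.id ℝ E + (0 : E →L[ℝ] E)).det := by
      simp [ContinuousLinearMap.det]
    have := hc.continuousAt.eventually (lt_mem_nhds h0)
    obtain ⟨δ, hδ, h⟩ := Metric.eventually_nhds_iff.1 this
    exact ⟨δ, hδ, fun B hB => h (by simpa using hB)⟩
  have hC0 : 0 ≤ C := (norm_nonneg _).trans (hC 0 (by simp))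
  have hK0 : (0:ℝ) ≤ K := K.2
  obtain ⟨ε, hε, hε1, hε2⟩ : ∃ ε > 0, ε * C < δ ∧ ε * (2 * K + 1) < 1 := by
    refine ⟨min (δ / (C + 1)) (1 / (2 * (2 * K + 1))), by positivity, ?_, ?_⟩
    · calc _ ≤ δ / (C+1) * C := by gcongr; exact min_le_left _ _
        _ < δ := by rw [div_mul_eq_mul_div, div_lt_iff₀ (by positivity)]; nlinarith
    · calc _ ≤ (1 / (2 * (2 * K + 1))) * (2 * (K:ℝ) + 1) := by gcongr; exact min_le_right _ _
        _ < 1 := by rw [div_mul_eq_mul_div, div_lt_iff₀ (by positivity)]; nlinarith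
  have hint : ∀ t : ℝ, IntegrableOn (fun x => (ContinuousLinearMap.id ℝ E + t • A x).det)
      (ball (0:E) 1) := by
    intro t
    refine (ContinuousOn.integrableOn_compact (isCompact_closedBall (0:E) 1) ?_).mono_set
      ball_subset_closedBall
    exact ContinuousLinearMap.continuous_det.comp_continuousOn
      (continuousOn_const.add (hAc.const_smul t))
  have key : ∀ t : ℝ, 0 < t → t ≤ ε →
      ∫ x in ball (0:E) 1, (ContinuousLinearMap.id ℝ E + t • A x).det
        = (volume : Measure E).real (ball (0:E) 1) := by
    intro t ht hte
    have happ : ApproximatesLinearOn (fun x => x + t • φ x)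
        ((ContinuousLinearEquiv.refl ℝ E : E ≃L[ℝ] E) : E →L[ℝ] E) univ
        (Real.toNNReal (t * (2 * K + 1))) := by
      intro x _ y _
      have : x + t • φ x - (y + t • φ y) -
        ((ContinuousLinearEquiv.refl ℝ E : E ≃L[ℝ] E) : E →L[ℝ] E) (x - y)
          = t • (φ x - φ y) := by
        simp only [ContinuousLinearEquiv.coe_refl, ContinuousLinearMap.id_apply, smul_sub]; abel
      rw [this, norm_smul, Real.norm_eq_abs, abs_of_pos ht, Real.coe_toNNReal _ (by positivity),
        mul_assoc]
      gcongr
      exact hφ x y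
    have hsmall : Subsingleton E ∨ Real.toNNReal (t * (2 * K + 1)) <
        ‖((ContinuousLinearEquiv.refl ℝ E).symm : E →L[ℝ] E)‖₊⁻¹ := by
      rcases subsingleton_or_nontrivial E with h | h
      · exact Or.inl h
      · right
        have : ‖((ContinuousLinearEquiv.refl ℝ E).symm : E →L[ℝ] E)‖₊ = 1 := by
          ext; simp
        rw [this, inv_one, Real.toNNReal_lt_one]
        calc _ ≤ ε * (2 * (K:ℝ) + 1) := by gcongr
          _ < 1 := hε2
    have hinj : Function.Injective (fun x => x + t • φ x) := injOn_univ.1 (happ.injOn hsmall)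
    have hsurj := happ.surjective hsmall
    have himg : (fun x => x + t • φ x) '' ball (0:E) 1 = ball (0:E) 1 := by
      have hcompl : (fun x => x + t • φ x) '' (ball (0:E) 1)ᶜ = (ball (0:E) 1)ᶜ := by
        have : EqOn (fun x => x + t • φ x) id (ball (0:E) 1)ᶜ := by
          intro x hx
          have : 1 ≤ ‖x‖ := by simpa using hx
          simp [hφ0 x this]
        rw [this.image_eq, image_id]
      have := Set.image_compl_eq (s := ball (0:E) 1) ⟨hinj, hsurj⟩
      rw [hcompl] at this
      exact (compl_inj_iff.1 this).symm
    have hcv := integral_image_eq_integral_abs_det_fderiv_smul (volume : Measure E)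
      (s := ball (0:E) 1) (f := fun x => x + t • φ x)
      (f' := fun x => ContinuousLinearMap.id ℝ E + t • A x) measurableSet_ball
      (by
        intro x hx
        have hx : ‖x‖ < 1 := by simpa using hx
        have h1 : HasFDerivAt (fun x => x + t • (s x - x))
          (ContinuousLinearMap.id ℝ E + t • A x) x :=
          (hasFDerivAt_id x).add (((hsd x hx.le).sub (hasFDerivAt_id x)).const_smul t)
        refine (h1.congr_of_eventuallyEq ?_).hasFDerivWithinAt
        have : ball (0:E) 1 ∈ nhds x := isOpen_ball.mem_nhds (by simpa using hx)
        filter_upwards [this] with y hy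
        have hy : ‖y‖ < 1 := by simpa using hy
        simp [φ, bwProj_of_le hy.le])
      hinj.injOn (fun _ => (1:ℝ))
    rw [himg] at hcv
    have h2 : ∫ x in ball (0:E) 1, (1:ℝ) = (volume : Measure E).real (ball (0:E) 1) := by simp
    rw [← h2, hcv]
    refine setIntegral_congr_fun measurableSet_ball fun x hx => ?_
    have : 0 < (ContinuousLinearMap.id ℝ E + t • A x).det := by
      apply hdet
      rw [norm_smul, Real.norm_eq_abs, abs_of_pos ht]
      calc _ ≤ ε * C := by
            gcongr
            exact hC x (ball_subset_closedBall hx)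
        _ < δ := hε1
    simp only [smul_eq_mul, mul_one, abs_of_pos this]
  let v : Fin (N+1) → ℝ := fun i => ε / ((i:ℕ) + 1)
  have hv : Function.Injective v := by
    intro i j hij
    simp only [v] at hij
    rw [div_eq_div_iff (by positivity) (by positivity)] at hij
    have := mul_left_cancel₀ hε.ne' hij
    have : ((j:ℕ):ℝ) = (i:ℕ) := by linarith
    exact Fin.ext (by exact_mod_cast this.symm)
  obtain ⟨w, hw1, hw⟩ := bw_interp v hv
  have hzero : ∀ x ∈ ball (0:E) 1, (ContinuousLinearMap.id ℝ E + (1:ℝ) • A x).det = 0 := by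
    intro x hx
    have hx : ‖x‖ < 1 := by simpa using hx
    have e : ContinuousLinearMap.id ℝ E + (1:ℝ) • A x = fderiv ℝ s x := by simp [A]
    rw [e]
    by_contra hne
    have hbij : Function.Surjective (fderiv ℝ s x) := by
      have h := (LinearEquiv.ofIsUnitDet (f := (fderiv ℝ s x : E →ₗ[ℝ] E))
        (v := (EuclideanSpace.basisFun (Fin N) ℝ).toBasis)
        (v' := (EuclideanSpace.basisFun (Fin N) ℝ).toBasis) (by
          rw [LinearMap.det_toMatrix]; exact isUnit_iff_ne_zero.2 hne)).surjective
      exact h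
    obtain ⟨z, hz⟩ := hbij (s x)
    have h1 : HasFDerivAt (fun y => ⟪s y, s y⟫) _ x := (hsd x hx.le).inner ℝ (hsd x hx.le)
    have h2 : HasFDerivAt (fun y => ⟪s y, s y⟫) (0 : E →L[ℝ] ℝ) x := by
      refine (hasFDerivAt_const (1:ℝ) x).congr_of_eventuallyEq ?_
      have : ball (0:E) 1 ∈ nhds x := isOpen_ball.mem_nhds (by simpa using hx)
      filter_upwards [this] with y hy
      have hy : ‖y‖ < 1 := by simpa using hy
      rw [real_inner_self_eq_norm_sq, hn y hy.le]; simp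
    have h3 := congrArg (fun L : E →L[ℝ] ℝ => L z) (h1.unique h2)
    simp [hz, fderivInnerCLM_apply, hn x hx.le] at h3
  have hvol : 0 < (volume : Measure E).real (ball (0:E) 1) :=
    ENNReal.toReal_pos (measure_ball_pos _ _ one_pos).ne' measure_ball_lt_top.ne
  have hfin : ∫ x in ball (0:E) 1, (ContinuousLinearMap.id ℝ E + (1:ℝ) • A x).det
      = (volume : Measure E).real (ball (0:E) 1) := by
    have hw' : (fun x => (ContinuousLinearMap.id ℝ E + (1:ℝ) • A x).det) = fun x =>
        ∑ i, w i * (ContinuousLinearMap.id ℝ E + v i • A x).det := funext fun x => hw (A x)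
    rw [hw', integral_finsetSum _ (fun i _ => (hint (v i)).const_mul (w i))]
    simp_rw [integral_const_mul]
    rw [Finset.sum_congr rfl (fun i _ => by
      rw [key (v i) (by positivity) (div_le_self hε.le (by simp))]), ← Finset.sum_mul, hw1, one_mul]
  rw [setIntegral_congr_fun measurableSet_ball hzero] at hfin
  simp at hfin
  exact hvol.ne hfin

theorem bw_smooth {N : ℕ} (g : EuclideanSpace ℝ (Fin N) → EuclideanSpace ℝ (Fin N))
    (hg : ContDiff ℝ 1 g) (hb : ∀ x, ‖g x‖ < 1) (hne : ∀ x, ‖x‖ ≤ 1 → g x ≠ x) : False := by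
  let E := EuclideanSpace ℝ (Fin N)
  let u : E → E := fun x => x - g x
  let p : E → ℝ := fun x => ⟪x, u x⟫
  let q : E → ℝ := fun x => ⟪u x, u x⟫
  let D : E → ℝ := fun x => p x ^ 2 + q x * (1 - ⟪x, x⟫)
  let s : E → E := fun x => x + ((-p x + √(D x)) / q x) • u x
  have hu : ContDiff ℝ 1 u := contDiff_id.sub hg
  have hp : ContDiff ℝ 1 p := contDiff_id.inner ℝ hu
  have hq : ContDiff ℝ 1 q := hu.inner ℝ hu
  have hD : ContDiff ℝ 1 D := (hp.pow 2).add (hq.mul (contDiff_const.sub (contDiff_id.inner ℝ contDiff_id)))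
  have hq0 : ∀ x, ‖x‖ ≤ 1 → 0 < q x := by
    intro x hx
    simp only [q]
    rw [real_inner_self_eq_norm_sq]
    have : u x ≠ 0 := sub_ne_zero.2 (hne x hx).symm
    positivity
  have hp0 : ∀ x, ‖x‖ = 1 → 0 < p x := by
    intro x hx
    simp only [p, u]
    rw [inner_sub_right, real_inner_self_eq_norm_sq, hx]
    have := real_inner_le_norm x (g x)
    rw [hx] at this
    linarith [hb x]
  have hD0 : ∀ x, ‖x‖ ≤ 1 → 0 < D x := by
    intro x hx
    simp only [D]
    rw [real_inner_self_eq_norm_sq]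
    rcases hx.lt_or_eq with h | h
    · have := hq0 x hx
      have h2 : 0 < 1 - ‖x‖ ^ 2 := by nlinarith [norm_nonneg x]
      positivity
    · rw [h]
      have := hp0 x h
      simp; positivity
  refine bw_no_retract s ?_ ?_ ?_
  · intro x hx
    refine contDiffAt_id.add (ContDiffAt.smul (ContDiffAt.div ?_ hq.contDiffAt (hq0 x hx).ne') hu.contDiffAt)
    exact hp.contDiffAt.neg.add (hD.contDiffAt.sqrt (hD0 x hx).ne')
  · intro x hx
    have h1 : D x = p x ^ 2 := by simp only [D]; rw [real_inner_self_eq_norm_sq, hx]; ring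
    simp only [s]
    rw [h1, Real.sqrt_sq (hp0 x hx).le]
    simp
  · intro x hx
    have h1 := Real.sq_sqrt (hD0 x hx).le
    have h2 := (hq0 x hx).ne'
    have h3 : ‖s x‖ ^ 2 = 1 := by
      rw [← real_inner_self_eq_norm_sq]
      simp only [s]
      rw [inner_add_left, inner_add_right, inner_add_right, inner_smul_left, inner_smul_right,
        inner_smul_left, inner_smul_right, real_inner_comm (x) (u x)]
      change ⟪x, x⟫ + _ * p x + ((starRingEnd ℝ) _ * p x + (starRingEnd ℝ) _ * (_ * q x)) = 1
      simp only [conj_trivial]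
      set r := √(D x)
      have h4 : r ^ 2 = p x ^ 2 + q x * (1 - ⟪x, x⟫) := h1
      field_simp
      linear_combination h4
    nlinarith [norm_nonneg (s x)]

theorem bw_unit {N : ℕ} (g : EuclideanSpace ℝ (Fin N) → EuclideanSpace ℝ (Fin N))
    (hg : Continuous g) (hb : ∀ x, ‖g x‖ ≤ 1) : ∃ x, ‖x‖ ≤ 1 ∧ g x = x := by
  by_contra! hne
  obtain ⟨x₀, hx₀, hmin⟩ := (isCompact_closedBall (0:EuclideanSpace ℝ (Fin N)) 1).exists_isMinOn
    ⟨0, by simp⟩ (continuous_id.sub hg).norm.continuousOn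
  set d := ‖x₀ - g x₀‖ with hd
  have hd0 : 0 < d := norm_pos_iff.2 (sub_ne_zero.2 (hne x₀ (by simpa using hx₀)).symm)
  have hdle : ∀ x, ‖x‖ ≤ 1 → d ≤ ‖x - g x‖ := fun x hx => hmin (by simpa using hx)
  set η := min (1/2) (d/2) with hη
  have hη0 : 0 < η := by positivity
  have hη1 : η ≤ 1/2 := min_le_left _ _
  have hη2 : η ≤ d/2 := min_le_right _ _
  obtain ⟨g', hg', happ, -⟩ := (hg.const_smul (1 - η)).exists_contDiff_approx 1
    (ε := fun _ => η) continuous_const (fun _ => hη0)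
  have happ' : ∀ x, ‖g' x - (1 - η) • g x‖ < η := fun x => by
    simpa [dist_eq_norm] using happ x
  refine bw_smooth g' (by exact_mod_cast hg') ?_ ?_
  · intro x
    have h1 : ‖(1 - η) • g x‖ ≤ (1 - η) * 1 := by
      rw [norm_smul, Real.norm_eq_abs, abs_of_pos (by linarith)]
      exact mul_le_mul_of_nonneg_left (hb x) (by linarith)
    have := norm_le_norm_add_norm_sub' (g' x) ((1 - η) • g x)
    linarith [happ' x]
  · intro x hx h
    have h0 := happ' x
    rw [h] at h0
    have h1 : x - g x = (x - (1 - η) • g x) - η • g x := by rw [sub_smul, one_smul]; abel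
    have h2 := hdle x hx
    rw [h1] at h2
    have h3 := norm_sub_le (x - (1 - η) • g x) (η • g x)
    have h4 : ‖η • g x‖ ≤ η * 1 := by
      rw [norm_smul, Real.norm_eq_abs, abs_of_pos hη0]
      exact mul_le_mul_of_nonneg_left (hb x) hη0.le
    linarith

theorem bwProj_continuous {N : ℕ} : Continuous (bwProj (N := N)) := by
  have h : Continuous fun x : EuclideanSpace ℝ (Fin N) => max 1 ‖x‖ :=
    continuous_const.max continuous_norm
  refine Continuous.smul (Continuous.inv₀ h ?_) continuous_id
  intro x
  positivity

theorem bw_homeo {N : ℕ} {X : Type*} [TopologicalSpace X] (x₀ : EuclideanSpace ℝ (Fin N)) (R : ℝ)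
    (hR : 0 < R) (e : X ≃ₜ (closedBall x₀ R : Set (EuclideanSpace ℝ (Fin N))))
    (P : X → X) (hP : Continuous P) : ∃ x, P x = x := by
  let b : EuclideanSpace ℝ (Fin N) → (closedBall x₀ R : Set (EuclideanSpace ℝ (Fin N))) :=
    fun z => ⟨x₀ + R • bwProj z, by
      rw [mem_closedBall, dist_eq_norm, add_sub_cancel_left, norm_smul, Real.norm_eq_abs,
        abs_of_pos hR]
      simpa using mul_le_mul_of_nonneg_left (bwProj_mem z) hR.le⟩
  have hbc : Continuous b :=
    (continuous_const.add (bwProj_continuous.const_smul R)).subtype_mk _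
  let g : EuclideanSpace ℝ (Fin N) → EuclideanSpace ℝ (Fin N) :=
    fun z => R⁻¹ • ((e (P (e.symm (b z))) : EuclideanSpace ℝ (Fin N)) - x₀)
  have hg : Continuous g := by
    have h : Continuous fun z => (e (P (e.symm (b z))) : EuclideanSpace ℝ (Fin N)) :=
      continuous_subtype_val.comp (e.continuous.comp (hP.comp (e.symm.continuous.comp hbc)))
    exact (h.sub continuous_const).const_smul R⁻¹
  obtain ⟨z, hz1, hz⟩ := bw_unit g hg (by
    intro z
    have := (e (P (e.symm (b z)))).2
    rw [mem_closedBall, dist_eq_norm] at this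
    simp only [g]
    rw [norm_smul, Real.norm_eq_abs, abs_of_pos (by positivity), inv_mul_le_iff₀ hR]
    simpa using this)
  refine ⟨e.symm (b z), ?_⟩
  apply e.injective
  rw [e.apply_symm_apply]
  apply Subtype.ext
  change _ = x₀ + R • bwProj z
  rw [bwProj_of_le hz1]
  nth_rw 2 [← hz]
  simp only [g]
  rw [smul_smul, mul_inv_cancel₀ hR.ne', one_smul]
  abel


/-- Delayed integral equation. -/
def OdeSol {N : ℕ} (F : ℝ × EuclideanSpace ℝ (Fin N) → EuclideanSpace ℝ (Fin N)) (M : NNReal)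
    (T h : ℝ) (x : EuclideanSpace ℝ (Fin N)) (y : ℝ → EuclideanSpace ℝ (Fin N)) : Prop :=
  LipschitzWith M y ∧ ∀ t ∈ Icc 0 T, y t = x + ∫ s in (0:ℝ)..t, F (s, y (max 0 (s - h)))

open Filter Topology in
theorem ode_limit {N : ℕ} {F : ℝ × EuclideanSpace ℝ (Fin N) → EuclideanSpace ℝ (Fin N)}
    (hF : Continuous F) {M : NNReal} (hM : ∀ p, ‖F p‖ ≤ M) {T : ℝ} (hT : 0 < T)
    {h : ℕ → ℝ} {x : ℕ → EuclideanSpace ℝ (Fin N)} {y : ℕ → ℝ → EuclideanSpace ℝ (Fin N)}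
    {x' : EuclideanSpace ℝ (Fin N)}
    (hy : ∀ n, OdeSol F M T (h n) (x n) (y n)) (hh : Tendsto h atTop (𝓝 0))
    (hx : Tendsto x atTop (𝓝 x')) :
    ∃ φ : ℕ → ℕ, StrictMono φ ∧ ∃ z, OdeSol F M T 0 x' z ∧
      ∀ t ∈ Icc 0 T, Tendsto (fun n => y (φ n) t) atTop (𝓝 (z t)) := by
  let Y : ℕ → BoundedContinuousFunction (Icc (0:ℝ) T) (EuclideanSpace ℝ (Fin N)) := fun n =>
    BoundedContinuousFunction.mkOfCompact ⟨fun t => y n t, (hy n).1.continuous.comp continuous_subtype_val⟩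
  have hy0 : ∀ n, y n 0 = x n := fun n => by
    have := (hy n).2 0 ⟨le_rfl, hT.le⟩
    simpa using this
  obtain ⟨C, hC⟩ := (Metric.isBounded_range_of_tendsto x hx).exists_norm_le
  have hcomp : IsCompact (closure (range Y)) := by
    refine BoundedContinuousFunction.arzela_ascoli (closedBall 0 (C + M * T))
      (isCompact_closedBall _ _) _ ?_ ?_
    · rintro _ t ⟨n, rfl⟩
      have h1 := (hy n).1.dist_le_mul t 0
      rw [hy0, dist_eq_norm, Real.dist_eq, sub_zero, abs_of_nonneg t.2.1] at h1
      have h2 := hC (x n) ⟨n, rfl⟩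
      have h3 : (M:ℝ) * t ≤ M * T := mul_le_mul_of_nonneg_left t.2.2 M.2
      have h4 := norm_le_norm_add_norm_sub' (y n t) (x n)
      rw [mem_closedBall_zero_iff]
      change ‖y n t‖ ≤ _
      linarith
    · refine UniformEquicontinuous.equicontinuous ?_
      refine LipschitzWith.uniformEquicontinuous _ M ?_
      rintro ⟨_, n, rfl⟩
      exact LipschitzWith.of_dist_le_mul fun s t => (hy n).1.dist_le_mul s t
  obtain ⟨z₀, -, φ, hφ, hlim⟩ := hcomp.tendsto_subseq (fun n => subset_closure (mem_range_self n))
  have hpt : ∀ t : Icc (0:ℝ) T, Tendsto (fun n => y (φ n) t) atTop (𝓝 (z₀ t)) := fun t =>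
    ((BoundedContinuousFunction.lipschitz_eval_const t).continuous.tendsto z₀).comp hlim
  let z : ℝ → EuclideanSpace ℝ (Fin N) := fun t => z₀ (projIcc 0 T hT.le t)
  have hzt : ∀ t ∈ Icc 0 T, Tendsto (fun n => y (φ n) t) atTop (𝓝 (z t)) := by
    intro t ht
    have := hpt ⟨t, ht⟩
    simpa [z, projIcc_of_mem hT.le ht] using this
  have hzl : LipschitzWith M z := by
    refine LipschitzWith.of_dist_le_mul fun s t => ?_
    have h1 : dist (z s) (z t) ≤ M * dist (projIcc 0 T hT.le s) (projIcc 0 T hT.le t) :=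
      le_of_tendsto ((hpt _).dist (hpt _)) (Eventually.of_forall fun n => (hy (φ n)).1.dist_le_mul _ _)
    refine h1.trans (mul_le_mul_of_nonneg_left ?_ M.2)
    have := (LipschitzWith.projIcc hT.le).dist_le_mul s t
    simpa using this
  refine ⟨φ, hφ, z, ⟨hzl, ?_⟩, hzt⟩
  intro t ht
  refine tendsto_nhds_unique (hzt t ht) ?_
  have e : (fun n => y (φ n) t) = fun n => x (φ n) + ∫ s in (0:ℝ)..t, F (s, y (φ n) (max 0 (s - h (φ n)))) :=
    funext fun n => (hy (φ n)).2 t ht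
  rw [e]
  refine (hx.comp hφ.tendsto_atTop).add ?_
  refine intervalIntegral.tendsto_integral_filter_of_dominated_convergence (fun _ => (M:ℝ)) ?_ ?_ ?_ ?_
  · refine Eventually.of_forall fun n => Continuous.aestronglyMeasurable ?_
    have := (hy (φ n)).1.continuous
    fun_prop
  · exact Eventually.of_forall fun n => Eventually.of_forall fun s _ => hM _
  · exact intervalIntegrable_const
  · refine Eventually.of_forall fun s hs => ?_
    rw [uIoc_of_le ht.1] at hs
    have hs' : s ∈ Icc 0 T := ⟨hs.1.le, hs.2.trans ht.2⟩
    refine (hF.tendsto _).comp (Tendsto.prodMk_nhds tendsto_const_nhds ?_)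
    rw [sub_zero, max_eq_right hs'.1]
    have h1 : Tendsto (fun n => max 0 (s - h (φ n))) atTop (𝓝 s) := by
      have : Tendsto (fun n => max 0 (s - h (φ n))) atTop (𝓝 (max 0 (s - 0))) :=
        tendsto_const_nhds.max (tendsto_const_nhds.sub (hh.comp hφ.tendsto_atTop))
      simpa [max_eq_right hs'.1] using this
    have h2 : Tendsto (fun n => (M:ℝ) * dist (max 0 (s - h (φ n))) s) atTop (𝓝 0) := by
      have := (h1.dist (tendsto_const_nhds (x := s))).const_mul (M:ℝ)
      simpa using this
    have h3 : Tendsto (fun n => dist (y (φ n) (max 0 (s - h (φ n)))) (y (φ n) s)) atTop (𝓝 0) :=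
      squeeze_zero (fun _ => dist_nonneg) (fun n => (hy (φ n)).1.dist_le_mul _ _) h2
    refine (tendsto_iff_of_dist ?_).1 (hzt s hs')
    simpa only [dist_comm] using h3

theorem ode_lip {N : ℕ} {F : ℝ × EuclideanSpace ℝ (Fin N) → EuclideanSpace ℝ (Fin N)}
    (hF : Continuous F) {M : NNReal} (hM : ∀ p, ‖F p‖ ≤ M) (h : ℝ)
    (x : EuclideanSpace ℝ (Fin N)) {y : ℝ → EuclideanSpace ℝ (Fin N)} (hy : Continuous y) :
    LipschitzWith M (fun t => x + ∫ s in (0:ℝ)..t, F (s, y (max 0 (s - h)))) := by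
  have hi : ∀ a b, IntervalIntegrable (fun s => F (s, y (max 0 (s - h)))) MeasureTheory.volume a b :=
    fun a b => Continuous.intervalIntegrable (by fun_prop) a b
  refine LipschitzWith.of_dist_le_mul fun s t => ?_
  rw [dist_eq_norm, add_sub_add_left_eq_sub, intervalIntegral.integral_interval_sub_left (hi _ _) (hi _ _)]
  exact intervalIntegral.norm_integral_le_of_norm_le_const fun _ _ => hM _

open Filter Topology in
theorem ode_peano {N : ℕ} {F : ℝ × EuclideanSpace ℝ (Fin N) → EuclideanSpace ℝ (Fin N)}
    (hF : Continuous F) {M : NNReal} (hM : ∀ p, ‖F p‖ ≤ M) {T : ℝ} (hT : 0 < T)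
    (x : EuclideanSpace ℝ (Fin N)) : ∃ y, OdeSol F M T 0 x y := by
  have key : ∀ h > 0, ∃ y, OdeSol F M T h x y := by
    intro h hh
    let A : (ℝ → EuclideanSpace ℝ (Fin N)) → (ℝ → EuclideanSpace ℝ (Fin N)) := fun y t =>
      x + ∫ s in (0:ℝ)..t, F (s, y (max 0 (s - h)))
    let Y : ℕ → ℝ → EuclideanSpace ℝ (Fin N) := fun k => A^[k] (fun _ => x)
    have hYs : ∀ k, Y (k+1) = A (Y k) := fun k => Function.iterate_succ_apply' A k _
    have hl : ∀ k, LipschitzWith M (Y k) := by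
      intro k
      induction k with
      | zero => exact LipschitzWith.of_dist_le_mul fun s t => by
                  simp [Y]; positivity
      | succ k ih => rw [hYs]; exact ode_lip hF hM h x ih.continuous
    have hst : ∀ k : ℕ, ∀ t, 0 ≤ t → t ≤ k * h → Y (k+1) t = Y k t := by
      intro k
      induction k with
      | zero =>
        intro t h0 h1
        have : t = 0 := le_antisymm (by simpa using h1) h0
        subst this
        simp [Y, A]
      | succ k ih =>
        intro t h0 h1
        rw [hYs (k+1), hYs k]
        simp only [A]
        congr 1
        refine intervalIntegral.integral_congr fun s hs => ?_
        rw [uIcc_of_le h0] at hs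
        have := ih (max 0 (s - h)) (le_max_left _ _) (by
          push_cast at h1
          refine max_le (by positivity) ?_
          linarith [hs.2])
        rw [hYs] at this
        exact congrArg (fun v => F (s, v)) this
    obtain ⟨k, hk⟩ := exists_nat_ge (T / h)
    refine ⟨Y k, hl k, fun t ht => ?_⟩
    rw [← hst k t ht.1 (ht.2.trans ((div_le_iff₀ hh).1 hk)), hYs]
  choose y hy using fun n : ℕ => key (1 / ((n:ℝ) + 1)) (by positivity)
  obtain ⟨-, -, z, hz, -⟩ := ode_limit hF hM hT hy tendsto_one_div_add_atTop_nhds_zero_nat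
    tendsto_const_nhds
  exact ⟨z, hz⟩

theorem ode_deriv {N : ℕ} {F : ℝ × EuclideanSpace ℝ (Fin N) → EuclideanSpace ℝ (Fin N)}
    (hF : Continuous F) {M : NNReal} {T : ℝ} {x : EuclideanSpace ℝ (Fin N)}
    {y : ℝ → EuclideanSpace ℝ (Fin N)} (hy : OdeSol F M T 0 x y) :
    ∀ t ∈ Icc 0 T, HasDerivWithinAt y (F (t, y t)) (Icc 0 T) t := by
  intro t ht
  have hc : Continuous fun s => F (s, y (max 0 (s - 0))) := by
    have := hy.1.continuous
    fun_prop
  have h1 := ((hc.integral_hasStrictDerivAt 0 t).hasDerivAt.const_add x).hasDerivWithinAt (s := Icc 0 T)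
  rw [sub_zero, max_eq_right ht.1] at h1
  exact h1.congr (fun s hs => hy.2 s hs) (hy.2 t ht)


theorem ode_extend {N : ℕ} {T : ℝ}
    (f : ℝ → EuclideanSpace ℝ (Fin N) → EuclideanSpace ℝ (Fin N))
    (K : Set (EuclideanSpace ℝ (Fin N))) (hK : IsCompact K)
    (hf : ContinuousOn (fun p : ℝ × EuclideanSpace ℝ (Fin N) => f p.1 p.2) (Icc (0 : ℝ) T ×ˢ K)) :
    ∃ (F : ℝ × EuclideanSpace ℝ (Fin N) → EuclideanSpace ℝ (Fin N)) (M : NNReal), Continuous F ∧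
      (∀ p, ‖F p‖ ≤ M) ∧ ∀ t ∈ Icc (0:ℝ) T, ∀ x ∈ K, F (t, x) = f t x := by
  have hc : IsCompact (Icc (0 : ℝ) T ×ˢ K) := isCompact_Icc.prod hK
  obtain ⟨C, hC⟩ := hc.exists_bound_of_continuousOn hf
  obtain ⟨g, hg⟩ := ContinuousMap.exists_restrict_eq hc.isClosed
    ⟨_, continuousOn_iff_continuous_domRestrict.1 hf⟩
  have hg' : ∀ t ∈ Icc (0:ℝ) T, ∀ x ∈ K, g (t, x) = f t x := fun t ht x hx =>
    congrArg (fun L => L ⟨(t, x), ht, hx⟩) hg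
  set R := max C 1 with hR
  have hR0 : 0 < R := lt_of_lt_of_le one_pos (le_max_right _ _)
  refine ⟨fun p => R • bwProj (R⁻¹ • g p), ⟨R, hR0.le⟩, ?_, ?_, ?_⟩
  · exact (bwProj_continuous.comp (g.continuous.const_smul R⁻¹)).const_smul R
  · intro p
    rw [norm_smul, Real.norm_eq_abs, abs_of_pos hR0]
    exact (mul_le_mul_of_nonneg_left (bwProj_mem (R⁻¹ • g p)) hR0.le).trans_eq (mul_one R)
  · intro t ht x hx
    simp only [hg' t ht x hx]
    rw [bwProj_of_le, smul_smul, mul_inv_cancel₀ hR0.ne', one_smul]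
    rw [norm_smul, Real.norm_eq_abs, abs_of_pos (by positivity), inv_mul_le_iff₀ hR0, mul_one]
    exact (hC (t, x) ⟨ht, hx⟩).trans (le_max_left _ _)

theorem ode_invariant {N : ℕ} {T : ℝ}
    (f : ℝ → EuclideanSpace ℝ (Fin N) → EuclideanSpace ℝ (Fin N))
    (G : Set (EuclideanSpace ℝ (Fin N))) (hG : IsOpen G)
    (r : EuclideanSpace ℝ (Fin N) → ℝ)
    (V : EuclideanSpace ℝ (Fin N) → EuclideanSpace ℝ (Fin N) → ℝ)
    (hbd : ∀ u ∈ frontier G, 0 < r u ∧ ContDiffOn ℝ 1 (V u) (ball u (r u)) ∧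
      V u u = 0 ∧ ∀ x ∈ G ∩ ball u (r u), V u x < 0)
    (hsub : ∀ u ∈ frontier G, ∃ ρ ∈ Ioc (0 : ℝ) (r u),
      ∀ t ∈ Icc (0 : ℝ) T, ∀ x ∈ G ∩ ball u ρ,
        ⟪f t x, gradient (V u) x⟫ ≤ 0)
    {F : ℝ × EuclideanSpace ℝ (Fin N) → EuclideanSpace ℝ (Fin N)}
    (hFf : ∀ t ∈ Icc (0:ℝ) T, ∀ x ∈ closure G, F (t, x) = f t x)
    {y : ℝ → EuclideanSpace ℝ (Fin N)} (hyc : Continuous y) (hy0 : y 0 ∈ G)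
    (hy : ∀ t ∈ Icc 0 T, HasDerivWithinAt y (F (t, y t)) (Icc 0 T) t) :
    ∀ t ∈ Icc 0 T, y t ∈ G := by
  by_contra! hcon
  obtain ⟨t₂, ht₂, hyt₂⟩ := hcon
  let S : Set ℝ := Icc 0 T ∩ y ⁻¹' Gᶜ
  have hS : IsCompact S := isCompact_Icc.inter_right (hG.isClosed_compl.preimage hyc)
  obtain ⟨t₁, ht₁S, hmin⟩ := hS.exists_isLeast ⟨t₂, ht₂, hyt₂⟩
  have hlt : ∀ t, 0 ≤ t → t < t₁ → y t ∈ G := by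
    intro t h0 h1
    by_contra h
    exact absurd (hmin ⟨⟨h0, h1.le.trans ht₁S.1.2⟩, h⟩) (not_le.2 h1)
  have hpos : 0 < t₁ := by
    rcases ht₁S.1.1.lt_or_eq with h | h
    · exact h
    · exact absurd hy0 (by rw [h]; exact ht₁S.2)
  set u := y t₁ with hu
  have hev : ∀ᶠ t in nhdsWithin t₁ (Iio t₁), 0 ≤ t ∧ t < t₁ := by
    filter_upwards [Ioo_mem_nhdsLT hpos] with t ht using ⟨ht.1.le, ht.2⟩
  have hufr : u ∈ frontier G := by
    rw [hG.frontier_eq]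
    refine ⟨?_, ht₁S.2⟩
    refine mem_closure_of_tendsto ((hyc.tendsto t₁).mono_left nhdsWithin_le_nhds) (b := nhdsWithin t₁ (Iio t₁)) ?_
    filter_upwards [hev] with t ht using hlt t ht.1 ht.2
  obtain ⟨hr, hV, hVu, hVneg⟩ := hbd u hufr
  obtain ⟨ρ, ⟨hρ0, hρr⟩, hin⟩ := hsub u hufr
  obtain ⟨δ, hδ, hball⟩ := Metric.mem_nhds_iff.1 ((hyc.tendsto t₁) (ball_mem_nhds u hρ0))
  set a := max 0 (t₁ - δ / 2) with ha
  have ha0 : 0 ≤ a := le_max_left _ _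
  have hat : a < t₁ := max_lt hpos (by linarith)
  have hnear : ∀ t ∈ Icc a t₁, y t ∈ ball u ρ := by
    intro t ht
    apply hball
    rw [mem_ball, Real.dist_eq, abs_lt]
    have := le_max_right 0 (t₁ - δ / 2)
    constructor <;> linarith [ht.1, ht.2]
  have hVd : ∀ x ∈ ball u ρ, DifferentiableAt ℝ (V u) x := fun x hx =>
    (hV.differentiableOn (by simp)).differentiableAt
      (isOpen_ball.mem_nhds (ball_subset_ball hρr hx))
  have hanti : AntitoneOn (fun t => V u (y t)) (Icc a t₁) := by
    have hder : ∀ t ∈ interior (Icc a t₁), HasDerivAt (fun t => V u (y t))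
        (⟪gradient (V u) (y t), f t (y t)⟫) t := by
      intro t ht
      rw [interior_Icc] at ht
      have htT : t ∈ Icc 0 T := ⟨ha0.trans ht.1.le, ht.2.le.trans ht₁S.1.2⟩
      have h1 : HasDerivAt y (f t (y t)) t := by
        rw [← hFf t htT _ (subset_closure (hlt t htT.1 ht.2))]
        exact (hy t htT).hasDerivAt (Icc_mem_nhds (ha0.trans_lt ht.1) (ht.2.trans_le ht₁S.1.2))
      have h2 := (hVd _ (hnear t ⟨ht.1.le, ht.2.le⟩)).hasGradientAt.hasFDerivAt
      exact h2.comp_hasDerivAt t h1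
    refine antitoneOn_of_deriv_nonpos (convex_Icc _ _) ?_ ?_ ?_
    · intro t ht
      exact ((hVd _ (hnear t ht)).continuousAt.comp hyc.continuousAt).continuousWithinAt
    · exact fun t ht => (hder t ht).differentiableAt.differentiableWithinAt
    · intro t ht
      rw [(hder t ht).deriv, real_inner_comm]
      rw [interior_Icc] at ht
      exact hin t ⟨ha0.trans ht.1.le, ht.2.le.trans ht₁S.1.2⟩ _
        ⟨hlt t (ha0.trans ht.1.le) ht.2, hnear t ⟨ht.1.le, ht.2.le⟩⟩
  have h1 := hanti (left_mem_Icc.2 hat.le) (right_mem_Icc.2 hat.le) hat.le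
  simp only [← hu, hVu] at h1
  have h2 := hVneg (y a) ⟨hlt a ha0 hat, ball_subset_ball hρr (hnear a (left_mem_Icc.2 hat.le))⟩
  linarith

open Filter Topology in
/-- Under a family of bounding functions for `G` satisfying the
sub-tangential condition near each boundary point, if `cl G` is homeomorphic to a
closed ball of `ℝ^N` and solutions of the Cauchy problems with values in `cl G` are
unique, then `ẏ = f(t,y)` has a `T`-periodic solution with values in `cl G`. -/
theorem periodic_solution_of_bounding_functions_uniqueness
    {N : ℕ} {T : ℝ} (hT : 0 < T)
    (Ω : Set (EuclideanSpace ℝ (Fin N))) (hΩ : IsOpen Ω)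
    (f : ℝ → EuclideanSpace ℝ (Fin N) → EuclideanSpace ℝ (Fin N))
    (hf : ContinuousOn (fun p : ℝ × EuclideanSpace ℝ (Fin N) => f p.1 p.2)
      (Icc (0 : ℝ) T ×ˢ Ω))
    (G : Set (EuclideanSpace ℝ (Fin N)))
    (hG : IsOpen G) (hGb : Bornology.IsBounded G) (hGΩ : closure G ⊆ Ω)
    (r : EuclideanSpace ℝ (Fin N) → ℝ)
    (V : EuclideanSpace ℝ (Fin N) → EuclideanSpace ℝ (Fin N) → ℝ)
    (hbd : ∀ u ∈ frontier G, 0 < r u ∧ ContDiffOn ℝ 1 (V u) (ball u (r u)) ∧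
      V u u = 0 ∧ ∀ x ∈ G ∩ ball u (r u), V u x < 0)
    (hsub : ∀ u ∈ frontier G, ∃ ρ ∈ Ioc (0 : ℝ) (r u),
      ∀ t ∈ Icc (0 : ℝ) T, ∀ x ∈ G ∩ ball u ρ,
        ⟪f t x, gradient (V u) x⟫ ≤ 0)
    (hball : ∃ (x₀ : EuclideanSpace ℝ (Fin N)) (R : ℝ), 0 < R ∧
      Nonempty ((closure G : Set (EuclideanSpace ℝ (Fin N))) ≃ₜ
        (closedBall x₀ R : Set (EuclideanSpace ℝ (Fin N)))))
    (huniq : ∀ a b : ℝ, 0 ≤ a → b ≤ T →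
      ∀ y₁ y₂ : ℝ → EuclideanSpace ℝ (Fin N),
      (∀ t ∈ Icc a b, y₁ t ∈ closure G) →
      (∀ t ∈ Icc a b, y₂ t ∈ closure G) →
      (∀ t ∈ Icc a b, HasDerivWithinAt y₁ (f t (y₁ t)) (Icc a b) t) →
      (∀ t ∈ Icc a b, HasDerivWithinAt y₂ (f t (y₂ t)) (Icc a b) t) →
      ∀ t₀ ∈ Icc a b, y₁ t₀ = y₂ t₀ → ∀ t ∈ Icc a b, y₁ t = y₂ t) :
    ∃ y : ℝ → EuclideanSpace ℝ (Fin N),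
      (∀ t ∈ Icc (0 : ℝ) T, y t ∈ Ω) ∧
      (∀ t ∈ Icc (0 : ℝ) T, HasDerivWithinAt y (f t (y t)) (Icc (0 : ℝ) T) t) ∧
      y 0 = y T ∧
      (∀ t ∈ Icc (0 : ℝ) T, y t ∈ closure G) := by
  obtain ⟨F, M, hF, hM, hFf⟩ := ode_extend f (closure G) hGb.isCompact_closure
    (hf.mono (prod_mono_right hGΩ))
  have h0T : (0:ℝ) ∈ Icc 0 T := ⟨le_rfl, hT.le⟩
  have hTT : T ∈ Icc 0 T := ⟨hT.le, le_rfl⟩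
  have hinit : ∀ {x y}, OdeSol F M T 0 x y → y 0 = x := fun {x y} h => by
    simpa using h.2 0 h0T
  have hder : ∀ {x y}, OdeSol F M T 0 x y → (∀ t ∈ Icc 0 T, y t ∈ closure G) →
      ∀ t ∈ Icc 0 T, HasDerivWithinAt y (f t (y t)) (Icc 0 T) t := fun {x y} h hc t ht => by
    rw [← hFf t ht _ (hc t ht)]
    exact ode_deriv hF h t ht
  have hex : ∀ x : closure G, ∃ y, OdeSol F M T 0 x y ∧ ∀ t ∈ Icc 0 T, y t ∈ closure G := by
    rintro ⟨x, hx⟩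
    obtain ⟨xs, hxs, hlim⟩ := mem_closure_iff_seq_limit.1 hx
    choose ys hys using fun n => ode_peano hF hM hT (xs n)
    obtain ⟨φ, -, z, hz, hzt⟩ := ode_limit hF hM hT hys tendsto_const_nhds hlim
    refine ⟨z, hz, fun t ht => mem_closure_of_tendsto (hzt t ht) (Eventually.of_forall fun n => ?_)⟩
    exact ode_invariant f G hG r V hbd hsub hFf (hys (φ n)).1.continuous
      (by rw [hinit (hys (φ n))]; exact hxs _) (ode_deriv hF (hys (φ n))) t ht
  choose Y hY hYc using hex
  let P : closure G → closure G := fun x => ⟨Y x T, hYc x T hTT⟩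
  have hP : Continuous P := by
    refine Continuous.subtype_mk ?_ _
    rw [continuous_iff_seqContinuous]
    intro xs x hlim
    refine tendsto_of_subseq_tendsto fun ns hns => ?_
    obtain ⟨φ, -, z, hz, hzt⟩ := ode_limit hF hM hT (fun n => hY (xs (ns n))) tendsto_const_nhds
      ((continuous_subtype_val.tendsto x).comp (hlim.comp hns))
    refine ⟨φ, ?_⟩
    have hzc : ∀ t ∈ Icc 0 T, z t ∈ closure G := fun t ht =>
      isClosed_closure.mem_of_tendsto (hzt t ht) (Eventually.of_forall fun n => hYc _ t ht)
    have := huniq 0 T le_rfl le_rfl z (Y x) hzc (hYc x) (hder hz hzc) (hder (hY x) (hYc x)) 0 h0T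
      (by rw [hinit hz, hinit (hY x)]) T hTT
    have h5 := hzt T hTT
    rw [this] at h5
    exact h5
  obtain ⟨x₀, R, hR, ⟨e⟩⟩ := hball
  obtain ⟨x, hx⟩ := bw_homeo x₀ R hR e P hP
  refine ⟨Y x, fun t ht => hGΩ (hYc x t ht), hder (hY x) (hYc x), ?_, hYc x⟩
  rw [hinit (hY x)]
  exact (congrArg Subtype.val hx).symm
end
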